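/- arXiv:2206.11001 — 4 statements merged into one kernel-verified Lean document; each statement's English description precedes it below -/
import Mathlib

section
/- Let R be a connected reduced order, and suppose (A,G) and (B,H) are elements of GpRg(R) such that A and B are stark. Then there exists a ring automorphism σ of R with σ(A) = B and σ(G) = H; in particular A is isomorphic to B as rings and G is isomorphic to H as groups. Moreover (A,H) and (B,G) also belong to GpRg(R). -/
/-- The natural ring homomorphism `A[G] → R` for a subring `A ⊆ R` and a subgroup `G ⊆ Rˣ`. -/
noncomputable def gpRgHom {R : Type*} [CommRing R] (A : Subring R) (G : Subgroup Rˣ) :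
    MonoidAlgebra A G →+* R :=
  MonoidAlgebra.liftNCRingHom A.subtype ((Units.coeHom R).comp G.subtype)
    (fun _ _ => Commute.all _ _)

/-- `A[G] = R`: the natural map `A[G] → R` is a ring isomorphism. -/
def IsGpRg {R : Type*} [CommRing R] (A : Subring R) (G : Subgroup Rˣ) : Prop :=
  Function.Bijective (gpRgHom A G)

/-- A commutative ring is connected if it is non-zero and `0`, `1` are its only idempotents. -/
def IsConnectedRing (R : Type*) [CommRing R] : Prop :=
  Nontrivial R ∧ ∀ e : R, IsIdempotentElem e → e = 0 ∨ e = 1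

/-- A commutative ring is stark if it is not isomorphic to any group ring `A[G]`
with `A` a ring and `G` a non-trivial group. -/
def IsStark (R : Type u) [CommRing R] : Prop :=
  ∀ (A : Type u) (_ : Ring A) (G : Type u) (_ : Group G),
    Nontrivial G → IsEmpty (R ≃+* MonoidAlgebra A G)

/-! Let `𝒜` be the grading of `R` by `G` coming from `A[G] = R`. The group of characters of `G`
acts on the set of homomorphisms `σ : R → ℂ` by twisting, so distinct homogeneous components are
orthogonal for the form `∑ σ, σ x * conj (σ y)`. As `R` is a reduced order, this form is positive
definite with finite sublevel sets, and two orthogonal projections onto direct summands of such a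
lattice always commute. Hence the gradings by `G` and `H` are compatible and, `R` being connected,
roots of unity are homogeneous. This gives degree homomorphisms `φ : H → G` and `ψ : G → H`.

The unit `g / ψ g` has degree `1` for the grading by `H`, so it lies in `B`, which inherits the
grading by `G`; there its degree is `α g = g / φ (ψ g)`. If `e` is an idempotent power of `α`,
then `B` is a group ring over the image of `e`, so starkness makes `α` nilpotent. As `α` fixes
`ker ψ` pointwise, `ψ` is injective. By symmetry `φ` and `ψ` are bijective, so the groups `G` and
`H` can be exchanged, and the augmentations `R → A` and `R → B` identify `A` with `B`. -/

open scoped ComplexConjugate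

theorem exists_isIdempotentElem_pow_succ {M : Type*} [Monoid M] [Finite M] (a : M) :
    ∃ n : ℕ, IsIdempotentElem (a ^ (n + 1)) := by
  let : TopologicalSpace M := ⊥
  have : DiscreteTopology M := ⟨rfl⟩
  obtain ⟨_, ⟨n, rfl⟩, h⟩ := exists_idempotent_in_compact_subsemigroup
    (fun _ => continuous_of_discreteTopology) (Set.range fun n : ℕ => a ^ (n + 1))
    (Set.range_nonempty _) (Set.toFinite _).isCompact <| by
      rintro _ ⟨m, rfl⟩ _ ⟨n, rfl⟩
      exact ⟨m + 1 + n, pow_add a (m + 1) (n + 1)⟩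
  exact ⟨n, h⟩

section Splitting

variable {M : Type*} [AddCommGroup M] {q : M → ℝ} {P Q : M →+ M}

/-- `P` decomposes every element orthogonally with respect to the quadratic function `q`, as the
orthogonal projections of a Hermitian space do for `q x = ‖x‖ ^ 2`. -/
def SplitsOrthogonally (q : M → ℝ) (P : M →+ M) : Prop :=
  ∀ x, q x = q (P x) + q (x - P x)

namespace SplitsOrthogonally

-- By minimality of `q x`, each of `P` and `Q` kills or fixes a minimal counterexample `x`.
theorem commute (hpos : ∀ x, x ≠ 0 → 0 < q x) (hfin : ∀ C, {x | q x ≤ C}.Finite)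
    (hP : SplitsOrthogonally q P) (hQ : SplitsOrthogonally q Q) : Function.Commute P Q := by
  by_contra hPQ
  obtain ⟨x₀, hx₀⟩ : ∃ x, P (Q x) ≠ Q (P x) := by
    simpa [Function.Commute, Function.Semiconj] using hPQ
  obtain ⟨x, ⟨hxC, hx⟩, hmin⟩ := Set.exists_min_image {x | q x ≤ q x₀ ∧ P (Q x) ≠ Q (P x)} q
    ((hfin (q x₀)).subset fun _ h => h.1) ⟨x₀, le_rfl, hx₀⟩
  have commute_of_lt {y : M} (hy : q y < q x) : P (Q y) = Q (P y) :=
    not_not.1 fun h => (hmin y ⟨hy.le.trans hxC, h⟩).not_gt hy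
  have kills_or_fixes {T : M →+ M} (hT : SplitsOrthogonally q T) : T x = 0 ∨ T x = x := by
    by_contra! h
    have pos₀ := hpos _ h.1
    have pos₁ := hpos _ (sub_ne_zero.2 h.2.symm)
    apply hx
    rw [← add_sub_cancel (T x) x]
    simp only [map_add, commute_of_lt (y := T x) (by linarith [hT x]),
      commute_of_lt (y := x - T x) (by linarith [hT x])]
  rcases kills_or_fixes hP with h | h <;> rcases kills_or_fixes hQ with h' | h' <;>
    simp [h, h'] at hx

theorem conjugate (hP : SplitsOrthogonally q P) (e : M ≃+ M) (he : ∀ x, q (e x) = q x) :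
    SplitsOrthogonally q ((e : M →+ M).comp (P.comp (e.symm : M →+ M))) := by
  intro x
  obtain ⟨y, rfl⟩ := e.surjective x
  simpa [← map_sub, he] using hP y

end SplitsOrthogonally

end Splitting

section Conjugates

variable {R : Type*} [CommRing R]

theorem charZero_quotient_of_mem_minimalPrimes [Module.IsTorsionFree ℤ R] {p : Ideal R}
    (hp : p ∈ minimalPrimes R) : CharZero (R ⧸ p) := by
  refine charZero_of_inj_zero fun n hn => not_not.1 fun hn₀ => ?_
  have hnp : (n : R) ∈ p := by
    rw [← Ideal.Quotient.eq_zero_iff_mem, map_natCast, hn]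
  refine notMem_nonZeroDivisors_of_mem_mem_minimalPrimes hnp hp ?_
  rw [mem_nonZeroDivisors_iff_right]
  intro y hy
  rw [← Int.cast_natCast, mul_comm, ← zsmul_eq_mul] at hy
  exact (smul_eq_zero.1 hy).resolve_left (by exact_mod_cast hn₀)

theorem exists_mem_minimalPrimes_notMem [IsReduced R] {x : R} (hx : x ≠ 0) :
    ∃ p ∈ minimalPrimes R, x ∉ p := by
  by_contra! h
  refine hx ((nilradical_eq_zero R).le ?_)
  rw [nilradical, ← Ideal.sInf_minimalPrimes]
  exact Ideal.mem_sInf.2 fun {p} hp => h p hp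

theorem exists_ringHom_complex_apply_ne_zero [Module.IsTorsionFree ℤ R] [Algebra.IsIntegral ℤ R]
    [IsReduced R] {x : R} (hx : x ≠ 0) : ∃ σ : R →+* ℂ, σ x ≠ 0 := by
  obtain ⟨p, hp, hxp⟩ := exists_mem_minimalPrimes_notMem hx
  have : p.IsPrime := hp.1.1
  have := charZero_quotient_of_mem_minimalPrimes hp
  have : Algebra.IsAlgebraic ℤ (FractionRing (R ⧸ p)) :=
    (IsFractionRing.isAlgebraic_iff' ℤ (R ⧸ p) _).1 inferInstance
  let f : FractionRing (R ⧸ p) →ₐ[ℤ] ℂ := IsAlgClosed.lift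
  refine ⟨f.toRingHom.comp ((algebraMap (R ⧸ p) _).comp (Ideal.Quotient.mk p)), fun h => hxp ?_⟩
  rw [← Ideal.Quotient.eq_zero_iff_mem]
  exact (map_eq_zero_iff _ (IsFractionRing.injective _ _)).1
    ((map_eq_zero_iff _ f.toRingHom.injective).1 h)

theorem finite_ringHom_complex [Module.Free ℤ R] [Module.Finite ℤ R] : Finite (R →+* ℂ) :=
  Finite.of_injective (fun f : R →+* ℂ => f.toIntAlgHom) fun f g h => by
    ext x; exact DFunLike.congr_fun h x

theorem exists_finiteDimensional_forall_apply_mem [Finite (R →+* ℂ)] [Module.Finite ℤ R] :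
    ∃ K : IntermediateField ℚ ℂ, FiniteDimensional ℚ K ∧ ∀ (σ : R →+* ℂ) (x : R), σ x ∈ K := by
  obtain ⟨s, hs⟩ := Module.Finite.fg_top (R := ℤ) (M := R)
  let t : Set ℂ := Set.range fun p : (R →+* ℂ) × s => p.1 p.2
  refine ⟨IntermediateField.adjoin ℚ t, ?_, fun σ x => ?_⟩
  · refine IntermediateField.finiteDimensional_adjoin ?_
    rintro _ ⟨⟨σ, x⟩, rfl⟩
    exact ((Algebra.IsIntegral.isIntegral (R := ℤ) (x : R)).map σ.toIntAlgHom).tower_top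
  · have hx : x ∈ Submodule.span ℤ (s : Set R) := hs ▸ Submodule.mem_top
    induction hx using Submodule.span_induction with
    | mem x hx => exact IntermediateField.subset_adjoin ℚ t ⟨(σ, ⟨x, hx⟩), rfl⟩
    | zero => simp
    | add x y _ _ hx hy => rw [map_add]; exact add_mem hx hy
    | smul n x _ hx => rw [map_zsmul]; exact zsmul_mem hx n

variable [Fintype (R →+* ℂ)]

/-- The sum of the squared absolute values of the conjugates of `x`: the squared norm of the image
of `x` in `ℂ ^ Hom(R, ℂ)`. -/
noncomputable def conjugatesNormSq (x : R) : ℝ := ∑ σ : R →+* ℂ, ‖σ x‖ ^ 2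

theorem conjugatesNormSq_pos [Module.IsTorsionFree ℤ R] [Algebra.IsIntegral ℤ R] [IsReduced R]
    {x : R} (hx : x ≠ 0) : 0 < conjugatesNormSq x := by
  obtain ⟨σ, hσ⟩ := exists_ringHom_complex_apply_ne_zero hx
  exact Finset.sum_pos' (fun _ _ => by positivity) ⟨σ, Finset.mem_univ _, by positivity⟩

theorem norm_apply_le_sqrt_conjugatesNormSq (σ : R →+* ℂ) (x : R) :
    ‖σ x‖ ≤ √(conjugatesNormSq x) :=
  Real.le_sqrt_of_sq_le <|
    Finset.single_le_sum (f := fun τ : R →+* ℂ => ‖τ x‖ ^ 2) (fun _ _ => by positivity)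
      (Finset.mem_univ σ)

-- All conjugates of `x` are integers of one number field, with bounded absolute values.
theorem finite_setOf_conjugatesNormSq_le [Module.IsTorsionFree ℤ R] [Module.Finite ℤ R]
    [IsReduced R] (C : ℝ) : {x : R | conjugatesNormSq x ≤ C}.Finite := by
  obtain ⟨K, hK, hmem⟩ := exists_finiteDimensional_forall_apply_mem (R := R)
  have : NumberField K := {}
  let restrict (σ : R →+* ℂ) : R →+* K := σ.codRestrict K.toSubring (hmem σ)
  refine Set.Finite.of_injOn (f := fun x σ => restrict σ x) ?_ ?_
    (Set.Finite.pi fun _ : R →+* ℂ => NumberField.Embeddings.finite_of_norm_le K ℂ √C)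
  · refine fun x hx σ _ =>
      ⟨(Algebra.IsIntegral.isIntegral (R := ℤ) x).map (restrict σ).toIntAlgHom, fun φ => ?_⟩
    exact (norm_apply_le_sqrt_conjugatesNormSq (φ.comp (restrict σ)) x).trans
      (Real.sqrt_le_sqrt hx)
  · intro x _ y _ hxy
    by_contra hne
    obtain ⟨σ, hσ⟩ := exists_ringHom_complex_apply_ne_zero (sub_ne_zero.2 hne)
    refine hσ ?_
    rw [map_sub, sub_eq_zero]
    exact congrArg (Subtype.val : K → ℂ) (congrFun hxy σ)

theorem conjugatesNormSq_mul_of_isOfFinOrder {u : R} (hu : IsOfFinOrder u) (x : R) :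
    conjugatesNormSq (u * x) = conjugatesNormSq x := by
  obtain ⟨n, hn, h⟩ := isOfFinOrder_iff_pow_eq_one.1 hu
  have norm_apply (σ : R →+* ℂ) : ‖σ u‖ = 1 :=
    Complex.norm_eq_one_of_pow_eq_one (by rw [← map_pow, h, map_one]) hn.ne'
  simp [conjugatesNormSq, norm_apply]

theorem conjugatesNormSq_add_of_sum_mul_conj_eq_zero {x y : R}
    (h : ∑ σ : R →+* ℂ, σ x * conj (σ y) = 0) :
    conjugatesNormSq (x + y) = conjugatesNormSq x + conjugatesNormSq y := by
  have h_re : ∑ σ : R →+* ℂ, (σ x * conj (σ y)).re = 0 := by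
    rw [← Complex.re_sum, h, Complex.zero_re]
  simp only [conjugatesNormSq, ← Complex.normSq_eq_norm_sq, map_add, Complex.normSq_add,
    Finset.sum_add_distrib, ← Finset.mul_sum, h_re, mul_zero, add_zero]

end Conjugates

/-- A grading of the ring `R` by the finite group `Γ`, given by its projections onto the homogeneous
components rather than by the components themselves. -/
structure GroupGrading (Γ R : Type*) [Group Γ] [Fintype Γ] [Ring R] where
  proj : Γ → R →+ R
  sum_proj (x : R) : ∑ γ, proj γ x = x
  proj_proj_of_ne {γ δ : Γ} (h : γ ≠ δ) (x : R) : proj γ (proj δ x) = 0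
  proj_mul {γ δ : Γ} {x y : R} (hx : proj γ x = x) (hy : proj δ y = y) :
    proj (γ * δ) (x * y) = x * y

namespace GroupGrading

section Ring

variable {Γ R : Type*} [Group Γ] [Fintype Γ] [Ring R] (𝒜 : GroupGrading Γ R)

/-- The additive group of homogeneous elements of degree `γ`. -/
def component (γ : Γ) : AddSubgroup R := (𝒜.proj γ).eqLocus (AddMonoidHom.id R)

variable {𝒜} {γ δ : Γ} {x y : R}

theorem mem_component : x ∈ 𝒜.component γ ↔ 𝒜.proj γ x = x := Iff.rfl

theorem proj_of_mem [DecidableEq Γ] (hx : x ∈ 𝒜.component δ) (γ : Γ) :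
    𝒜.proj γ x = if γ = δ then x else 0 := by
  split_ifs with h
  · exact h ▸ hx
  · rw [← mem_component.1 hx, 𝒜.proj_proj_of_ne h]

variable (𝒜) in
theorem proj_mem_component (γ : Γ) (x : R) : 𝒜.proj γ x ∈ 𝒜.component γ := by
  rw [mem_component, ← Fintype.sum_eq_single γ fun δ h => 𝒜.proj_proj_of_ne h x, 𝒜.sum_proj]

theorem eq_of_mem_component (hx : x ≠ 0) (hγ : x ∈ 𝒜.component γ) (hδ : x ∈ 𝒜.component δ) :
    γ = δ := by
  by_contra h
  exact hx (by rw [← mem_component.1 hγ, ← mem_component.1 hδ, 𝒜.proj_proj_of_ne h])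

theorem mul_mem_component (hx : x ∈ 𝒜.component γ) (hy : y ∈ 𝒜.component δ) :
    x * y ∈ 𝒜.component (γ * δ) := 𝒜.proj_mul hx hy

variable (𝒜) in
@[elab_as_elim]
theorem component_induction {motive : R → Prop}
    (mem : ∀ γ, ∀ x ∈ 𝒜.component γ, motive x) (zero : motive 0)
    (add : ∀ x y, motive x → motive y → motive (x + y)) (x : R) : motive x := by
  rw [← 𝒜.sum_proj x]
  exact Finset.sum_induction _ motive add zero fun γ _ => mem γ _ (𝒜.proj_mem_component γ x)

theorem proj_mul_of_mem (hy : y ∈ 𝒜.component δ) (γ : Γ) (x : R) :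
    𝒜.proj γ (x * y) = 𝒜.proj (γ * δ⁻¹) x * y := by
  classical
  induction x using 𝒜.component_induction with
  | zero => simp
  | add x x' hx hx' => simp only [add_mul, map_add, hx, hx']
  | mem ε x hx =>
    simp only [proj_of_mem hx, proj_of_mem (mul_mem_component hx hy), mul_inv_eq_iff_eq_mul,
      ite_mul, zero_mul]

variable (𝒜) in
theorem one_mem_component : (1 : R) ∈ 𝒜.component 1 := by
  have proj_one_mul (x : R) : 𝒜.proj 1 1 * x = x := by
    induction x using 𝒜.component_induction with
    | zero => simp
    | add x y hx hy => rw [mul_add, hx, hy]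
    | mem γ x hx =>
      rw [← mul_inv_cancel γ, ← proj_mul_of_mem hx, one_mul, mem_component.1 hx]
  rw [mem_component, ← mul_one (𝒜.proj 1 1), proj_one_mul]

theorem inv_mem_component {u : Rˣ} (hu : (u : R) ∈ 𝒜.component γ) :
    (↑u⁻¹ : R) ∈ 𝒜.component γ⁻¹ := by
  rw [mem_component, ← one_mul γ⁻¹, ← Units.mul_left_inj u, ← proj_mul_of_mem hu, u.inv_mul]
  exact 𝒜.one_mem_component

theorem div_mem_component {u v : Rˣ} (hu : (u : R) ∈ 𝒜.component γ)
    (hv : (v : R) ∈ 𝒜.component δ) : (↑(u / v) : R) ∈ 𝒜.component (γ / δ) := by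
  rw [div_eq_mul_inv, div_eq_mul_inv, Units.val_mul]
  exact mul_mem_component hu (inv_mem_component hv)

variable (𝒜) in
/-- The subring of homogeneous elements of degree `1`. -/
def degreeOne : Subring R :=
  { 𝒜.component 1 with
    mul_mem' := fun hx hy => by simpa using mul_mem_component hx hy
    one_mem' := 𝒜.one_mem_component }

theorem mem_degreeOne : x ∈ 𝒜.degreeOne ↔ x ∈ 𝒜.component 1 := Iff.rfl

theorem exists_degreeHom [Nontrivial R] {M : Type*} [Monoid M] (f : M →* Rˣ)
    (hf : ∀ m, ∃ γ, (f m : R) ∈ 𝒜.component γ) :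
    ∃ φ : M →* Γ, ∀ m, (f m : R) ∈ 𝒜.component (φ m) := by
  choose φ hφ using hf
  refine ⟨MonoidHom.mk' φ fun m n => eq_of_mem_component (f (m * n)).ne_zero (hφ _) ?_, hφ⟩
  rw [map_mul, Units.val_mul]
  exact mul_mem_component (hφ m) (hφ n)

variable (𝒜) in
/-- The grading induced on a subring that is stable under all projections. -/
def restrict (B : Subring R) (hB : ∀ γ, ∀ x ∈ B, 𝒜.proj γ x ∈ B) : GroupGrading Γ B where
  proj γ := ((𝒜.proj γ).comp B.subtype.toAddMonoidHom).codRestrict B fun x => hB γ x x.2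
  sum_proj x := Subtype.ext <| by simpa using 𝒜.sum_proj (x : R)
  proj_proj_of_ne h x := Subtype.ext <| 𝒜.proj_proj_of_ne h (x : R)
  proj_mul hx hy := Subtype.ext <|
    𝒜.proj_mul (congrArg Subtype.val hx) (congrArg Subtype.val hy)

theorem mem_restrict_component {B : Subring R} {hB : ∀ γ, ∀ x ∈ B, 𝒜.proj γ x ∈ B} {x : B} :
    x ∈ (𝒜.restrict B hB).component γ ↔ (x : R) ∈ 𝒜.component γ := Subtype.ext_iff

end Ring

section Coarsen

variable {Γ I R : Type*} [Group Γ] [Fintype Γ] [Group I] [DecidableEq I] [Ring R]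
  (𝒜 : GroupGrading Γ R) (r : Γ →* I)

/-- The projection onto the sum of the components whose degree is mapped to `i` by `r`. -/
def coarseProj (i : I) : R →+ R := ∑ γ with r γ = i, 𝒜.proj γ

variable {𝒜 r} {γ : Γ} {x : R}

theorem coarseProj_of_mem (hx : x ∈ 𝒜.component γ) (i : I) :
    𝒜.coarseProj r i x = if i = r γ then x else 0 := by
  classical
  simp [coarseProj, proj_of_mem hx, eq_comm]

variable (𝒜 r) in
theorem coarseProj_mul_coarseProj (i j : I) (x y : R) :
    𝒜.coarseProj r (i * j) (𝒜.coarseProj r i x * 𝒜.coarseProj r j y) =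
      𝒜.coarseProj r i x * 𝒜.coarseProj r j y := by
  induction x using 𝒜.component_induction with
  | zero => simp
  | add x x' hx hx' => simp only [map_add, add_mul, hx, hx']
  | mem γ x hx =>
    induction y using 𝒜.component_induction with
    | zero => simp
    | add y y' hy hy' => simp only [map_add, mul_add, hy, hy']
    | mem δ y hy =>
      rw [coarseProj_of_mem hx, coarseProj_of_mem hy]
      split_ifs with hi hj
      · rw [coarseProj_of_mem (mul_mem_component hx hy), if_pos (by rw [map_mul, hi, hj])]
      all_goals simp

variable [Fintype I]

variable (𝒜 r) in
/-- The grading by `I` obtained by applying `r` to all degrees. -/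
def coarsen : GroupGrading I R where
  proj := 𝒜.coarseProj r
  sum_proj x := by
    induction x using 𝒜.component_induction with
    | zero => simp
    | add x y hx hy => simp only [map_add, Finset.sum_add_distrib, hx, hy]
    | mem γ x hx => simp [coarseProj_of_mem hx]
  proj_proj_of_ne {i j} hij x := by
    induction x using 𝒜.component_induction with
    | zero => simp
    | add x y hx hy => simp only [map_add, hx, hy, add_zero]
    | mem γ x hx =>
      rw [coarseProj_of_mem hx]
      split_ifs with h
      · rw [coarseProj_of_mem hx, if_neg (h ▸ hij)]
      · rw [map_zero]
  proj_mul {i j x y} hx hy := by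
    have h := 𝒜.coarseProj_mul_coarseProj r i j x y
    rwa [hx, hy] at h

theorem mem_coarsen_component (hx : x ∈ 𝒜.component γ) : x ∈ (𝒜.coarsen r).component (r γ) := by
  rw [mem_component]
  exact (coarseProj_of_mem hx _).trans (if_pos rfl)

end Coarsen

section GroupRing

variable {Γ Δ R : Type*} [Group Γ] [Fintype Γ] [Group Δ] [CommRing R] {𝒜 : GroupGrading Γ R}

theorem proj_liftNCRingHom (e : Δ ≃* Γ) (u : Δ →* R) (hu : ∀ δ, u δ ∈ 𝒜.component (e δ))
    (y : MonoidAlgebra 𝒜.degreeOne Δ) (δ : Δ) :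
    𝒜.proj (e δ) (MonoidAlgebra.liftNCRingHom 𝒜.degreeOne.subtype u (fun _ _ => .all _ _) y) =
      y.coeff δ * u δ := by
  classical
  induction y using MonoidAlgebra.induction_linear with
  | zero => simp
  | add y z hy hz => simp [hy, hz, add_mul]
  | single ε a =>
    have h := mul_mem_component (mem_degreeOne.1 a.2) (hu ε)
    rw [one_mul] at h
    rw [MonoidAlgebra.liftNCRingHom_single, Subring.subtype_apply, proj_of_mem h,
      MonoidAlgebra.coeff_single, Finsupp.single_apply]
    simp only [e.injective.eq_iff, eq_comm (a := δ)]
    split_ifs with hδ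
    · rw [hδ]
    · simp

theorem bijective_liftNCRingHom (e : Δ ≃* Γ) (u : Δ →* R)
    (hu : ∀ δ, u δ ∈ 𝒜.component (e δ)) :
    Function.Bijective
      (MonoidAlgebra.liftNCRingHom 𝒜.degreeOne.subtype u fun _ _ => .all _ _) := by
  have mul_inv (δ : Δ) : u δ * u δ⁻¹ = 1 := by rw [← map_mul, mul_inv_cancel, map_one]
  constructor
  · rw [injective_iff_map_eq_zero]
    intro y hy
    ext δ
    have h : (y.coeff δ : R) * u δ = 0 := by rw [← proj_liftNCRingHom e u hu, hy, map_zero]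
    simpa [mul_assoc, mul_inv] using congrArg (· * u δ⁻¹) h
  · intro x
    induction x using 𝒜.component_induction with
    | zero => exact ⟨0, map_zero _⟩
    | add x y hx hy =>
      obtain ⟨x, rfl⟩ := hx
      obtain ⟨y, rfl⟩ := hy
      exact ⟨x + y, map_add _ x y⟩
    | mem γ x hx =>
      obtain ⟨δ, rfl⟩ := e.surjective γ
      have h : x * u δ⁻¹ ∈ 𝒜.degreeOne :=
        mem_degreeOne.2 (by simpa using mul_mem_component hx (hu δ⁻¹))
      refine ⟨.single δ ⟨x * u δ⁻¹, h⟩, ?_⟩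
      rw [MonoidAlgebra.liftNCRingHom_single, Subring.subtype_apply, mul_assoc,
        mul_comm (u δ⁻¹), mul_inv, mul_one]

theorem isGpRg_degreeOne {H : Subgroup Rˣ} (e : H ≃* Γ)
    (h : ∀ k : H, ((k : Rˣ) : R) ∈ 𝒜.component (e k)) : IsGpRg 𝒜.degreeOne H :=
  bijective_liftNCRingHom e ((Units.coeHom R).comp H.subtype) h

end GroupRing

end GroupGrading

namespace IsStark

open GroupGrading

variable {S Γ : Type u} [CommRing S] [Group Γ] [Fintype Γ] {𝒜 : GroupGrading Γ S}

theorem subsingleton_of_grading (hS : IsStark S) (β : Γ →* S)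
    (hβ : ∀ γ, β γ ∈ 𝒜.component γ) : Subsingleton Γ :=
  not_nontrivial_iff_subsingleton.1 fun hΓ =>
    (hS 𝒜.degreeOne inferInstance Γ inferInstance hΓ).false
      (RingEquiv.ofBijective _ (bijective_liftNCRingHom (.refl Γ) β hβ)).symm

-- The range of an idempotent power `e` of `α` is a retract of `Γ`, and the grading coarsened along
-- this retraction has a homogeneous section, obtained from `β`.
theorem exists_iterate_eq_one (hS : IsStark S) (α : Monoid.End Γ) (β : Γ →* S)
    (hβ : ∀ γ, β γ ∈ 𝒜.component (α γ)) : ∃ n, ∀ γ, α^[n] γ = 1 := by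
  classical
  have : Finite (Monoid.End Γ) := .of_injective _ (DFunLike.coe_injective (F := Γ →* Γ))
  obtain ⟨n, hn⟩ := exists_isIdempotentElem_pow_succ α
  let e : Γ →* Γ := α ^ (n + 1)
  let α' : Γ →* Γ := α ^ n
  have e_apply (γ : Γ) : e γ = α (α' γ) := DFunLike.congr_fun (pow_succ' α n) γ
  have rangeRestrict_apply (i : e.range) : e.rangeRestrict i = i := by
    obtain ⟨_, γ, rfl⟩ := i
    exact Subtype.ext (DFunLike.congr_fun hn γ)
  have : Subsingleton e.range := by
    refine hS.subsingleton_of_grading (𝒜 := 𝒜.coarsen e.rangeRestrict)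
      (β.comp (α'.comp e.range.subtype)) fun i => ?_
    have h := mem_coarsen_component (r := e.rangeRestrict) (hβ (α' i))
    have e_apply_coe : e i = i := congrArg Subtype.val (rangeRestrict_apply i)
    rwa [← e_apply, e_apply_coe, rangeRestrict_apply] at h
  refine ⟨n + 1, fun γ => ?_⟩
  rw [← Monoid.End.coe_pow]
  exact congrArg Subtype.val (Subsingleton.elim (e.rangeRestrict γ) 1)

end IsStark

theorem conj_apply_eq_apply_inv {Γ : Type*} [Group Γ] [Finite Γ] (χ : Γ →* ℂˣ) (γ : Γ) :
    conj (χ γ : ℂ) = χ γ⁻¹ := by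
  have h : (χ γ : ℂ) ^ Nat.card Γ = 1 := by
    rw [← Units.val_pow_eq_pow_val, ← map_pow, pow_card_eq_one', map_one, Units.val_one]
  rw [map_inv, Units.val_inv_eq_inv_val,
    Complex.inv_eq_conj (Complex.norm_eq_one_of_pow_eq_one h Nat.card_pos.ne')]

namespace GroupGrading

section Twist

variable {Γ R K : Type*} [Group Γ] [Fintype Γ] [Ring R] [CommRing K] {𝒜 : GroupGrading Γ R}

theorem sum_apply_proj_mul_of_mem (χ : Γ →* Kˣ) (σ : R →+* K) {γ : Γ} {x : R}
    (hx : x ∈ 𝒜.component γ) : ∑ δ, σ (𝒜.proj δ x) * χ δ = σ x * χ γ := by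
  classical
  simp [proj_of_mem hx, apply_ite σ]

variable (𝒜) in
/-- The ring homomorphism `σ` with its values on the component of degree `γ` multiplied by `χ γ`. -/
def twist (χ : Γ →* Kˣ) (σ : R →+* K) : R →+* K where
  toFun x := ∑ γ, σ (𝒜.proj γ x) * χ γ
  map_zero' := by simp
  map_one' := by simp [sum_apply_proj_mul_of_mem χ σ 𝒜.one_mem_component]
  map_add' x y := by simp [add_mul, Finset.sum_add_distrib]
  map_mul' x y := by
    induction x using 𝒜.component_induction with
    | zero => simp
    | add x x' hx hx' => simp_all [add_mul, Finset.sum_add_distrib]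
    | mem γ x hx =>
      induction y using 𝒜.component_induction with
      | zero => simp
      | add y y' hy hy' => simp_all [mul_add, add_mul, Finset.sum_add_distrib]
      | mem δ y hy =>
        simp only [sum_apply_proj_mul_of_mem χ σ hx, sum_apply_proj_mul_of_mem χ σ hy,
          sum_apply_proj_mul_of_mem χ σ (mul_mem_component hx hy), map_mul, Units.val_mul]
        ring

theorem twist_apply_of_mem (χ : Γ →* Kˣ) (σ : R →+* K) {γ : Γ} {x : R}
    (hx : x ∈ 𝒜.component γ) : 𝒜.twist χ σ x = σ x * χ γ :=
  sum_apply_proj_mul_of_mem χ σ hx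

theorem twist_twist (χ ψ : Γ →* Kˣ) (σ : R →+* K) (h : ∀ γ, χ γ * ψ γ = 1) :
    𝒜.twist χ (𝒜.twist ψ σ) = σ := by
  ext x
  induction x using 𝒜.component_induction with
  | zero => simp
  | add x y hx hy => rw [map_add, hx, hy, map_add]
  | mem γ x hx =>
    rw [twist_apply_of_mem _ _ hx, twist_apply_of_mem _ _ hx, mul_assoc, ← Units.val_mul,
      mul_comm (ψ γ), h, Units.val_one, mul_one]

variable (𝒜) in
/-- Twisting by a character permutes the homomorphisms to `K`. -/
def twistEquiv (χ : Γ →* Kˣ) : (R →+* K) ≃ (R →+* K) where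
  toFun := 𝒜.twist χ
  invFun := 𝒜.twist χ⁻¹
  left_inv σ := twist_twist _ _ σ fun γ => inv_mul_cancel (χ γ)
  right_inv σ := twist_twist _ _ σ fun γ => mul_inv_cancel (χ γ)

end Twist

section Orthogonality

variable {Γ R : Type*} [CommGroup Γ] [Fintype Γ] [CommRing R] {𝒜 : GroupGrading Γ R}

-- Twisting by a character `χ` multiplies the sum by `χ (γ * δ⁻¹)`.
theorem sum_mul_conj_eq_zero [Fintype (R →+* ℂ)] {γ δ : Γ} (hγδ : γ ≠ δ) {x y : R}
    (hx : x ∈ 𝒜.component γ) (hy : y ∈ 𝒜.component δ) :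
    ∑ σ : R →+* ℂ, σ x * conj (σ y) = 0 := by
  obtain ⟨χ, hχ⟩ := CommGroup.exists_apply_ne_one_of_hasEnoughRootsOfUnity Γ ℂ
    (a := γ * δ⁻¹) (by rwa [Ne, mul_inv_eq_one])
  have h : ∑ σ : R →+* ℂ, σ x * conj (σ y) =
      χ (γ * δ⁻¹) * ∑ σ : R →+* ℂ, σ x * conj (σ y) := by
    rw [Finset.mul_sum, ← Equiv.sum_comp (𝒜.twistEquiv χ)]
    refine Finset.sum_congr rfl fun σ _ => ?_
    change 𝒜.twist χ σ x * conj (𝒜.twist χ σ y) = _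
    rw [twist_apply_of_mem χ σ hx, twist_apply_of_mem χ σ hy, map_mul,
      conj_apply_eq_apply_inv, map_mul, Units.val_mul]
    ring
  by_contra h_ne
  exact hχ (Units.ext ((mul_eq_right₀ h_ne).1 h.symm))

variable (𝒜) in
theorem splitsOrthogonally_proj [Fintype (R →+* ℂ)] (γ : Γ) :
    SplitsOrthogonally conjugatesNormSq (𝒜.proj γ) := by
  classical
  intro x
  have hx : x - 𝒜.proj γ x = ∑ δ ∈ Finset.univ.erase γ, 𝒜.proj δ x := by
    rw [sub_eq_iff_eq_add, Finset.sum_erase_add _ _ (Finset.mem_univ γ), 𝒜.sum_proj]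
  rw [← conjugatesNormSq_add_of_sum_mul_conj_eq_zero, add_sub_cancel]
  simp only [hx, map_sum, Finset.mul_sum]
  rw [Finset.sum_comm]
  exact Finset.sum_eq_zero fun δ hδ => sum_mul_conj_eq_zero (Finset.ne_of_mem_erase hδ).symm
    (𝒜.proj_mem_component γ x) (𝒜.proj_mem_component δ x)

variable [Module.Free ℤ R] [Module.Finite ℤ R] [IsReduced R]

theorem proj_commute {Δ : Type*} [CommGroup Δ] [Fintype Δ] (𝒜 : GroupGrading Γ R)
    (ℬ : GroupGrading Δ R) (γ : Γ) (δ : Δ) : Function.Commute (𝒜.proj γ) (ℬ.proj δ) := by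
  have := finite_ringHom_complex (R := R)
  have := Fintype.ofFinite (R →+* ℂ)
  exact (𝒜.splitsOrthogonally_proj γ).commute (fun _ => conjugatesNormSq_pos)
    finite_setOf_conjugatesNormSq_le (ℬ.splitsOrthogonally_proj δ)

variable (𝒜) in
theorem inv_mul_proj_mem_degreeOne {u : Rˣ} (hu : IsOfFinOrder u) (γ : Γ) :
    ↑u⁻¹ * 𝒜.proj γ u ∈ 𝒜.degreeOne := by
  have := finite_ringHom_complex (R := R)
  have := Fintype.ofFinite (R →+* ℂ)
  have h_conj := (𝒜.splitsOrthogonally_proj γ).conjugate (DistribMulAction.toAddEquiv R u⁻¹)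
    (conjugatesNormSq_mul_of_isOfFinOrder (Units.isOfFinOrder_val.2 hu.inv))
  have h := (𝒜.splitsOrthogonally_proj 1).commute (fun _ => conjugatesNormSq_pos)
    finite_setOf_conjugatesNormSq_le h_conj 1
  rw [mem_component.1 𝒜.one_mem_component] at h
  simpa [mem_degreeOne, mem_component, Units.smul_def] using h

variable (𝒜) in
theorem isIdempotentElem_inv_mul_proj {u : Rˣ} (hu : IsOfFinOrder u) (γ : Γ) :
    IsIdempotentElem (↑u⁻¹ * 𝒜.proj γ u) := by
  have h := proj_mul_of_mem (mem_degreeOne.1 (𝒜.inv_mul_proj_mem_degreeOne hu γ)) γ u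
  rw [u.mul_inv_cancel_left, mem_component.1 (𝒜.proj_mem_component γ _), inv_one, mul_one] at h
  rw [IsIdempotentElem, mul_assoc, ← h]

variable (𝒜) in
theorem exists_mem_component_of_isOfFinOrder (hR : IsConnectedRing R) {u : Rˣ}
    (hu : IsOfFinOrder u) : ∃ γ, (u : R) ∈ 𝒜.component γ := by
  have := hR.1
  have h_sum : ∑ γ, ↑u⁻¹ * 𝒜.proj γ u = 1 := by
    rw [← Finset.mul_sum, 𝒜.sum_proj, u.inv_mul]
  obtain ⟨γ, -, hγ⟩ := Finset.exists_ne_zero_of_sum_ne_zero (h_sum ▸ one_ne_zero)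
  have h_one := (hR.2 _ (𝒜.isIdempotentElem_inv_mul_proj hu γ)).resolve_left hγ
  exact ⟨γ, by rwa [Units.inv_mul_eq_one, eq_comm] at h_one⟩

theorem exists_subgroup_degreeHom (hR : IsConnectedRing R) (𝒜 : GroupGrading Γ R)
    (H : Subgroup Rˣ) [Finite H] :
    ∃ φ : H →* Γ, ∀ k : H, ((k : Rˣ) : R) ∈ 𝒜.component (φ k) :=
  have := hR.1
  exists_degreeHom H.subtype fun k =>
    𝒜.exists_mem_component_of_isOfFinOrder hR (H.subtype.isOfFinOrder (isOfFinOrder_of_finite k))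

end Orthogonality

section Stark

variable {Γ R : Type u} {Δ : Type*} [CommGroup Γ] [Fintype Γ] [CommGroup Δ] [Fintype Δ]
  [CommRing R] [Module.Free ℤ R] [Module.Finite ℤ R] [IsReduced R]
  {𝒜 : GroupGrading Γ R} {ℬ : GroupGrading Δ R}

-- The units `u γ / v (ψ γ)` lie in `ℬ.degreeOne`, where they have degree `γ / φ (ψ γ)` for `𝒜`.
-- This degree is `γ` if `ψ γ = 1`, while starkness makes `γ ↦ γ / φ (ψ γ)` nilpotent.
theorem injective_degreeHom (hℬ : IsStark ℬ.degreeOne) {u : Γ →* Rˣ} {v : Δ →* Rˣ}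
    {φ : Δ →* Γ} {ψ : Γ →* Δ}
    (hu𝒜 : ∀ γ, (u γ : R) ∈ 𝒜.component γ) (huℬ : ∀ γ, (u γ : R) ∈ ℬ.component (ψ γ))
    (hv𝒜 : ∀ δ, (v δ : R) ∈ 𝒜.component (φ δ)) (hvℬ : ∀ δ, (v δ : R) ∈ ℬ.component δ) :
    Function.Injective ψ := by
  let α : Γ →* Γ := .id Γ / φ.comp ψ
  let β : Γ →* ℬ.degreeOne := ((Units.coeHom R).comp (u / v.comp ψ)).codRestrict _ fun γ =>
    mem_degreeOne.2 (div_self' (ψ γ) ▸ div_mem_component (huℬ γ) (hvℬ (ψ γ)))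
  have stable (γ : Γ) (x : R) (hx : x ∈ ℬ.degreeOne) : 𝒜.proj γ x ∈ ℬ.degreeOne := by
    rw [mem_degreeOne, mem_component, ← proj_commute 𝒜 ℬ γ 1 x, mem_component.1 hx]
  have hβ (γ : Γ) : β γ ∈ (𝒜.restrict ℬ.degreeOne stable).component (α γ) :=
    mem_restrict_component.2 (div_mem_component (hu𝒜 γ) (hv𝒜 (ψ γ)))
  obtain ⟨n, hn⟩ := hℬ.exists_iterate_eq_one α β hβ
  refine (injective_iff_map_eq_one ψ).2 fun γ hγ => ?_
  have h_fixed : Function.IsFixedPt α γ := by simp [α, Function.IsFixedPt, hγ]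
  exact (h_fixed.iterate n).symm.trans (hn γ)

end Stark

end GroupGrading

namespace IsGpRg

section Projections

variable {R : Type*} [CommRing R] {A : Subring R} {G : Subgroup Rˣ}

/-- The natural map as an isomorphism `A[G] ≃+* R`. -/
noncomputable def equiv (h : IsGpRg A G) : MonoidAlgebra A G ≃+* R :=
  RingEquiv.ofBijective (gpRgHom A G) h

theorem equiv_single (h : IsGpRg A G) (a : A) (g : G) :
    h.equiv (.single g a) = a * ((g : Rˣ) : R) :=
  MonoidAlgebra.liftNCRingHom_single (h_comm := fun _ _ => .all _ _) ..

theorem equiv_symm_mul (h : IsGpRg A G) (a : A) (g : G) :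
    h.equiv.symm (a * ((g : Rˣ) : R)) = .single g a := by
  rw [RingEquiv.symm_apply_eq, equiv_single]

@[elab_as_elim]
theorem induction_on (h : IsGpRg A G) {motive : R → Prop} (zero : motive 0)
    (add : ∀ x y, motive x → motive y → motive (x + y))
    (mul : ∀ (a : A) (g : G), motive (a * ((g : Rˣ) : R))) (x : R) : motive x := by
  obtain ⟨y, rfl⟩ := h.equiv.surjective x
  induction y using MonoidAlgebra.induction_linear with
  | zero => rwa [map_zero]
  | add x y hx hy => rw [map_add]; exact add _ _ hx hy
  | single g a => rw [equiv_single]; exact mul a g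

theorem finite [Nontrivial R] [Module.Finite ℤ R] (h : IsGpRg A G) : Finite G :=
  have : Module.Finite ℤ (MonoidAlgebra A G) :=
    Module.Finite.equiv h.equiv.symm.toAddEquiv.toIntLinearEquiv
  have : Module.Finite A (MonoidAlgebra A G) := Module.Finite.of_restrictScalars_finite ℤ A _
  Module.Finite.finite_basis (MonoidAlgebra.basis G A)

variable (h : IsGpRg A G)

/-- The projection of `R = A[G]` onto `A * g`. -/
noncomputable def proj (g : G) : R →+ R :=
  AddMonoidHom.mk' (fun x => ((h.equiv.symm x).coeff g : R) * ((g : Rˣ) : R)) fun x y => by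
    simp [add_mul]

theorem proj_mul_coe [DecidableEq G] (g k : G) (a : A) :
    h.proj g (a * ((k : Rˣ) : R)) = if g = k then a * ((k : Rˣ) : R) else 0 := by
  simp only [proj, AddMonoidHom.mk'_apply, equiv_symm_mul, MonoidAlgebra.coeff_single,
    Finsupp.single_apply, eq_comm (a := g)]
  split_ifs with hg
  · rw [hg]
  · simp

theorem proj_eq_self_iff {g : G} {x : R} : h.proj g x = x ↔ ∃ a : A, a * ((g : Rˣ) : R) = x := by
  classical
  refine ⟨fun hx => ⟨_, hx⟩, ?_⟩
  rintro ⟨a, rfl⟩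
  rw [proj_mul_coe, if_pos rfl]

/-- The grading of `R = A[G]` by `G`. -/
noncomputable def grading [Fintype G] : GroupGrading G R where
  proj := h.proj
  sum_proj x := by
    classical
    induction x using h.induction_on with
    | zero => simp
    | add x y hx hy => simp only [map_add, Finset.sum_add_distrib, hx, hy]
    | mul a g => simp [proj_mul_coe]
  proj_proj_of_ne {g k} hgk x := by
    classical
    exact (h.proj_mul_coe g k _).trans (if_neg hgk)
  proj_mul {g k x y} hx hy := by
    obtain ⟨a, rfl⟩ := h.proj_eq_self_iff.1 hx
    obtain ⟨b, rfl⟩ := h.proj_eq_self_iff.1 hy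
    exact h.proj_eq_self_iff.2 ⟨a * b, by push_cast; ring⟩

theorem mem_grading_component [Fintype G] {g : G} {x : R} :
    x ∈ h.grading.component g ↔ ∃ a : A, a * ((g : Rˣ) : R) = x := h.proj_eq_self_iff

theorem coe_mem_grading_component [Fintype G] (g : G) :
    ((g : Rˣ) : R) ∈ h.grading.component g :=
  h.mem_grading_component.2 ⟨1, by simp⟩

theorem grading_degreeOne [Fintype G] : h.grading.degreeOne = A := by
  ext x
  simp [GroupGrading.mem_degreeOne, mem_grading_component]

theorem congr_group [Fintype G] {H : Subgroup Rˣ} (e : H ≃* G)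
    (he : ∀ k : H, ((k : Rˣ) : R) ∈ h.grading.component (e k)) : IsGpRg A H := by
  have hA := GroupGrading.isGpRg_degreeOne e he
  rwa [grading_degreeOne] at hA

/-- The augmentation `A[G] → A`. -/
noncomputable def augmentation : R →+* A :=
  (MonoidAlgebra.lift A A G 1).toRingHom.comp h.equiv.symm.toRingHom

theorem augmentation_mul_coe (a : A) (g : G) : h.augmentation (a * ((g : Rˣ) : R)) = a := by
  simp [augmentation, equiv_symm_mul]

theorem augmentation_coe (a : A) : h.augmentation a = a := by
  simpa using h.augmentation_mul_coe a 1

theorem augmentation_coe_group (g : G) : h.augmentation ((g : Rˣ) : R) = 1 := by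
  simpa using h.augmentation_mul_coe 1 g

end Projections

variable {R : Type*} [CommRing R] {A B : Subring R} {G H : Subgroup Rˣ}

theorem augmentation_augmentation (hA : IsGpRg A H) (hB : IsGpRg B H) (x : R) :
    hA.augmentation (hB.augmentation x : R) = hA.augmentation x := by
  induction x using hB.induction_on with
  | zero => simp
  | add x y hx hy => simp only [map_add, Subring.coe_add, hx, hy]
  | mul b g => rw [augmentation_mul_coe, map_mul, augmentation_coe_group, mul_one]

/-- Coefficient rings with the same group are identified by the augmentations. -/
noncomputable def coeffEquiv (hA : IsGpRg A H) (hB : IsGpRg B H) : A ≃+* B :=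
  RingEquiv.ofRingHom (hB.augmentation.comp A.subtype) (hA.augmentation.comp B.subtype)
    (RingHom.ext fun b => (augmentation_augmentation hB hA b).trans (hB.augmentation_coe b))
    (RingHom.ext fun a => (augmentation_augmentation hA hB a).trans (hA.augmentation_coe a))

theorem exists_ringEquiv_extending (hA : IsGpRg A G) (hB : IsGpRg B H) (τ : A ≃+* B)
    (f : G ≃* H) : ∃ σ : R ≃+* R, (∀ a : A, σ a = τ a) ∧
      ∀ g : G, σ ((g : Rˣ) : R) = ((f g : Rˣ) : R) := by
  let σ : R ≃+* R := hA.equiv.symm.trans <| (MonoidAlgebra.mapRingEquiv G τ).trans <|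
    (MonoidAlgebra.mapDomainRingEquiv B f).trans hB.equiv
  have σ_mul (a : A) (g : G) : σ (a * ((g : Rˣ) : R)) = τ a * ((f g : Rˣ) : R) := by
    simp only [σ, RingEquiv.trans_apply, equiv_symm_mul, MonoidAlgebra.mapRingEquiv_single,
      MonoidAlgebra.mapDomainRingEquiv_single, equiv_single]
  exact ⟨σ, fun a => by simpa using σ_mul a 1, fun g => by simpa using σ_mul 1 g⟩

theorem exists_ringEquiv_map_eq (hA : IsGpRg A G) (hB : IsGpRg B H) (τ : A ≃+* B)
    (f : G ≃* H) : ∃ σ : R ≃+* R, A.map σ.toRingHom = B ∧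
      G.map (Units.map σ.toRingHom.toMonoidHom) = H := by
  obtain ⟨σ, hστ, hσf⟩ := exists_ringEquiv_extending hA hB τ f
  refine ⟨σ, SetLike.ext fun b => ?_, SetLike.ext fun k => ?_⟩
  · constructor
    · rintro ⟨a, ha, rfl⟩
      exact hστ ⟨a, ha⟩ ▸ (τ ⟨a, ha⟩).2
    · intro hb
      obtain ⟨a, ha⟩ := τ.surjective ⟨b, hb⟩
      exact ⟨a, a.2, (hστ a).trans (congrArg Subtype.val ha)⟩
  · constructor
    · rintro ⟨g, hg, rfl⟩
      have h : Units.map σ.toRingHom.toMonoidHom g = f ⟨g, hg⟩ := Units.ext (hσf ⟨g, hg⟩)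
      exact h ▸ (f ⟨g, hg⟩).2
    · intro hk
      obtain ⟨g, hg⟩ := f.surjective ⟨k, hk⟩
      exact ⟨g, g.2, Units.ext ((hσf g).trans (congrArg (fun k : H => ((k : Rˣ) : R)) hg))⟩

theorem exists_injective_degreeHom {R : Type u} [CommRing R] [Module.Free ℤ R] [Module.Finite ℤ R]
    [IsReduced R] {A B : Subring R} {G H : Subgroup Rˣ} [Fintype H] (hA : IsGpRg A G)
    (hB : IsGpRg B H) (hR : IsConnectedRing R) (hBstark : IsStark B) :
    ∃ ψ : G →* H, (∀ g : G, ((g : Rˣ) : R) ∈ hB.grading.component (ψ g)) ∧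
      Function.Injective ψ := by
  have := hR.1
  have := hA.finite
  have := Fintype.ofFinite G
  obtain ⟨φ, hφ⟩ := GroupGrading.exists_subgroup_degreeHom hR hA.grading H
  obtain ⟨ψ, hψ⟩ := GroupGrading.exists_subgroup_degreeHom hR hB.grading G
  rw [← hB.grading_degreeOne] at hBstark
  exact ⟨ψ, hψ, GroupGrading.injective_degreeHom hBstark (u := G.subtype) (v := H.subtype)
    hA.coe_mem_grading_component hψ hφ hB.coe_mem_grading_component⟩

end IsGpRg

/-- Let `R` be a connected reduced order and let `(A,G), (B,H) ∈ GpRg(R)`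
with `A` and `B` stark. Then some ring automorphism `σ` of `R` maps `A` onto `B` and `G`
onto `H`; in particular `A ≅ B` as rings and `G ≅ H` as groups. Moreover
`(A,H), (B,G) ∈ GpRg(R)`. -/
theorem stark_pairs_conjugate
    {R : Type u} [CommRing R] [Module.Free ℤ R] [Module.Finite ℤ R] [IsReduced R]
    (hconn : IsConnectedRing R)
    (A B : Subring R) (G H : Subgroup Rˣ)
    (hAstark : IsStark A) (hBstark : IsStark B)
    (hAG : IsGpRg A G) (hBH : IsGpRg B H) :
    (∃ σ : R ≃+* R,
        A.map σ.toRingHom = B ∧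
        G.map (Units.map σ.toRingHom.toMonoidHom) = H) ∧
      Nonempty (A ≃+* B) ∧ Nonempty (G ≃* H) ∧ IsGpRg A H ∧ IsGpRg B G := by
  have := hconn.1
  have := hAG.finite
  have := hBH.finite
  have := Fintype.ofFinite G
  have := Fintype.ofFinite H
  obtain ⟨φ, hφ, hφ_inj⟩ := hBH.exists_injective_degreeHom hAG hconn hAstark
  obtain ⟨ψ, hψ, hψ_inj⟩ := hAG.exists_injective_degreeHom hBH hconn hBstark
  have hcard : Nat.card G = Nat.card H := (Nat.card_le_card_of_injective ψ hψ_inj).antisymm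
    (Nat.card_le_card_of_injective φ hφ_inj)
  let e : H ≃* G :=
    .ofBijective φ ((Nat.bijective_iff_injective_and_card φ).2 ⟨hφ_inj, hcard.symm⟩)
  let f : G ≃* H :=
    .ofBijective ψ ((Nat.bijective_iff_injective_and_card ψ).2 ⟨hψ_inj, hcard⟩)
  have hAH : IsGpRg A H := hAG.congr_group e hφ
  have hBG : IsGpRg B G := hBH.congr_group f hψ
  let τ : A ≃+* B := hAH.coeffEquiv hBH
  exact ⟨hAG.exists_ringEquiv_map_eq hBH τ f, ⟨τ⟩, ⟨f⟩, hAH, hBG⟩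
end

section
/- Let R be a (not necessarily commutative) ring, let M and N be left R-modules, and let f: M → N and g: N → M be R-linear maps. For an endomorphism h of an R-module P, define Im(h) = ⋂_{n≥1} h^n(P) and Ker(h) = ⋃_{n≥1} ker(h^n). Then f maps Im(g∘f) into Im(f∘g) and maps Ker(g∘f) into Ker(f∘g); and if M and N have finite length, then the restriction of f to a map Im(g∘f) → Im(f∘g) is an isomorphism. -/
/-- `Im(h) = ⋂_{n ≥ 1} h^n(P)` for an endomorphism `h` of a module `P`. -/
def stableIm {R M : Type*} [Ring R] [AddCommGroup M] [Module R M] (h : Module.End R M) :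
    Submodule R M :=
  ⨅ n : ℕ, LinearMap.range (h ^ (n + 1))

/-- `Ker(h) = ⋃_{n ≥ 1} ker(h^n)` for an endomorphism `h` of a module `P`. -/
def stableKer {R M : Type*} [Ring R] [AddCommGroup M] [Module R M] (h : Module.End R M) :
    Submodule R M :=
  ⨆ n : ℕ, LinearMap.ker (h ^ (n + 1))

/-!
Since `(f ∘ g)ⁿ⁺¹ = f ∘ (g ∘ f)ⁿ ∘ g`, the images of the powers of `g ∘ f` stabilize exactly when
those of `f ∘ g` do, and once they do, `f` maps the stable image of `g ∘ f` onto that of `f ∘ g`.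
The kernels of the powers likewise stabilize together; once they do, at `k`, an element
`x = (g ∘ f)ᵏ⁺¹ z` killed by `g ∘ f` satisfies `(g ∘ f)ᵏ z = 0`, hence `x = 0`, so `f` is injective
on the stable image.
-/

section

variable {R M N : Type*}

section Semiring

variable [Semiring R] [AddCommMonoid M] [Module R M] [AddCommMonoid N] [Module R N]

theorem comp_pow_comp (f : M →ₗ[R] N) (g : N →ₗ[R] M) (n : ℕ) :
    ((f ∘ₗ g : Module.End R N) ^ n) ∘ₗ f = f ∘ₗ ((g ∘ₗ f : Module.End R M) ^ n) :=
  Module.End.commute_pow_left_of_commute (LinearMap.comp_assoc f g f) n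

theorem comp_pow_succ (f : M →ₗ[R] N) (g : N →ₗ[R] M) (n : ℕ) :
    (f ∘ₗ g : Module.End R N) ^ (n + 1) = f ∘ₗ ((g ∘ₗ f : Module.End R M) ^ n) ∘ₗ g := by
  rw [pow_succ, Module.End.mul_eq_comp, ← LinearMap.comp_assoc, comp_pow_comp,
    LinearMap.comp_assoc]

end Semiring

variable [Ring R] [AddCommGroup M] [Module R M] [AddCommGroup N] [Module R N]

theorem stableIm_le_range_pow_succ (h : Module.End R M) (n : ℕ) :
    stableIm h ≤ LinearMap.range (h ^ (n + 1)) :=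
  iInf_le _ n

theorem ker_pow_succ_le_stableKer (h : Module.End R M) (n : ℕ) :
    LinearMap.ker (h ^ (n + 1)) ≤ stableKer h :=
  le_iSup (fun n : ℕ => LinearMap.ker (h ^ (n + 1))) n

theorem map_stableIm_le {f : M →ₗ[R] N} {a : Module.End R M} {b : Module.End R N}
    (hab : b ∘ₗ f = f ∘ₗ a) : (stableIm a).map f ≤ stableIm b := by
  refine le_iInf fun n => ?_
  calc (stableIm a).map f
      ≤ (LinearMap.range (a ^ (n + 1))).map f :=
        Submodule.map_mono (stableIm_le_range_pow_succ a n)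
    _ = LinearMap.range ((b ^ (n + 1)) ∘ₗ f) := by
        rw [Module.End.commute_pow_left_of_commute hab, LinearMap.range_comp]
    _ ≤ LinearMap.range (b ^ (n + 1)) := LinearMap.range_comp_le_range _ _

theorem stableKer_le_comap {f : M →ₗ[R] N} {a : Module.End R M} {b : Module.End R N}
    (hab : b ∘ₗ f = f ∘ₗ a) : stableKer a ≤ (stableKer b).comap f := by
  refine iSup_le fun n => ?_
  calc LinearMap.ker (a ^ (n + 1))
      ≤ LinearMap.ker (f ∘ₗ (a ^ (n + 1))) := LinearMap.ker_le_ker_comp _ _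
    _ = (LinearMap.ker (b ^ (n + 1))).comap f := by
        rw [← Module.End.commute_pow_left_of_commute hab, LinearMap.ker_comp]
    _ ≤ (stableKer b).comap f := Submodule.comap_mono (ker_pow_succ_le_stableKer b n)

theorem exists_range_pow_le_stableIm [IsArtinian R M] (h : Module.End R M) :
    ∃ k, LinearMap.range (h ^ k) ≤ stableIm h := by
  obtain ⟨k, hk⟩ := (LinearMap.eventually_iInf_range_pow_eq h).exists
  exact ⟨k, hk ▸ le_iInf fun n => iInf_le _ (n + 1)⟩

theorem exists_stableKer_le_ker_pow [IsNoetherian R M] (h : Module.End R M) :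
    ∃ k, stableKer h ≤ LinearMap.ker (h ^ k) := by
  obtain ⟨k, hk⟩ := (LinearMap.eventually_iSup_ker_pow_eq h).exists
  exact ⟨k, hk ▸ iSup_le fun n => le_iSup (fun m => LinearMap.ker (h ^ m)) (n + 1)⟩

theorem disjoint_stableIm_ker {h : Module.End R M} {k : ℕ}
    (hk : stableKer h ≤ LinearMap.ker (h ^ k)) : Disjoint (stableIm h) (LinearMap.ker h) := by
  refine Submodule.disjoint_def.mpr fun x hxim hx => ?_
  obtain ⟨z, rfl⟩ := stableIm_le_range_pow_succ h k hxim
  have hz : z ∈ LinearMap.ker (h ^ (k + 1 + 1)) := by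
    rwa [LinearMap.mem_ker, pow_succ', Module.End.mul_apply]
  have hzk : (h ^ k) z = 0 := hk (ker_pow_succ_le_stableKer h (k + 1) hz)
  rw [pow_succ', Module.End.mul_apply, hzk, map_zero]

theorem range_pow_succ_le_stableIm_comp {f : M →ₗ[R] N} {g : N →ₗ[R] M} {k : ℕ}
    (hk : LinearMap.range ((f ∘ₗ g : Module.End R N) ^ k) ≤ stableIm (f ∘ₗ g)) :
    LinearMap.range ((g ∘ₗ f : Module.End R M) ^ (k + 1)) ≤ stableIm (g ∘ₗ f) := by
  calc LinearMap.range ((g ∘ₗ f : Module.End R M) ^ (k + 1))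
      = (LinearMap.range (((f ∘ₗ g : Module.End R N) ^ k) ∘ₗ f)).map g := by
        rw [comp_pow_succ, LinearMap.range_comp]
    _ ≤ (stableIm (f ∘ₗ g)).map g :=
        Submodule.map_mono ((LinearMap.range_comp_le_range _ _).trans hk)
    _ ≤ stableIm (g ∘ₗ f) := map_stableIm_le (LinearMap.comp_assoc g f g)

theorem stableKer_comp_le_ker_pow_succ {f : M →ₗ[R] N} {g : N →ₗ[R] M} {k : ℕ}
    (hk : stableKer (f ∘ₗ g) ≤ LinearMap.ker ((f ∘ₗ g : Module.End R N) ^ k)) :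
    stableKer (g ∘ₗ f) ≤ LinearMap.ker ((g ∘ₗ f : Module.End R M) ^ (k + 1)) := by
  calc stableKer (g ∘ₗ f)
      ≤ (stableKer (f ∘ₗ g)).comap f := stableKer_le_comap (LinearMap.comp_assoc f g f)
    _ ≤ LinearMap.ker (((f ∘ₗ g : Module.End R N) ^ k) ∘ₗ f) := by
        rw [LinearMap.ker_comp]
        exact Submodule.comap_mono hk
    _ ≤ LinearMap.ker ((g ∘ₗ f : Module.End R M) ^ (k + 1)) := by
        rw [comp_pow_succ]
        exact LinearMap.ker_le_ker_comp _ _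

theorem disjoint_stableIm_comp_ker (f : M →ₗ[R] N) (g : N →ₗ[R] M)
    (hMN : IsNoetherian R M ∨ IsNoetherian R N) :
    Disjoint (stableIm (g ∘ₗ f)) (LinearMap.ker f) := by
  obtain ⟨k, hk⟩ : ∃ k, stableKer (g ∘ₗ f) ≤ LinearMap.ker ((g ∘ₗ f : Module.End R M) ^ k) := by
    rcases hMN with _ | _
    · exact exists_stableKer_le_ker_pow _
    · obtain ⟨k, hk⟩ := exists_stableKer_le_ker_pow (f ∘ₗ g)
      exact ⟨k + 1, stableKer_comp_le_ker_pow_succ hk⟩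
  exact (disjoint_stableIm_ker hk).mono_right (LinearMap.ker_le_ker_comp f g)

theorem stableIm_comp_le_map (f : M →ₗ[R] N) (g : N →ₗ[R] M)
    (hMN : IsArtinian R M ∨ IsArtinian R N) :
    stableIm (f ∘ₗ g) ≤ (stableIm (g ∘ₗ f)).map f := by
  obtain ⟨k, hk⟩ : ∃ k, LinearMap.range ((g ∘ₗ f : Module.End R M) ^ k) ≤ stableIm (g ∘ₗ f) := by
    rcases hMN with _ | _
    · exact exists_range_pow_le_stableIm _
    · obtain ⟨k, hk⟩ := exists_range_pow_le_stableIm (f ∘ₗ g)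
      exact ⟨k + 1, range_pow_succ_le_stableIm_comp hk⟩
  calc stableIm (f ∘ₗ g)
      ≤ LinearMap.range ((f ∘ₗ g : Module.End R N) ^ (k + 1)) := stableIm_le_range_pow_succ _ k
    _ = (LinearMap.range (((g ∘ₗ f : Module.End R M) ^ k) ∘ₗ g)).map f := by
        rw [comp_pow_succ, LinearMap.range_comp]
    _ ≤ (stableIm (g ∘ₗ f)).map f :=
        Submodule.map_mono ((LinearMap.range_comp_le_range _ _).trans hk)

theorem fitting_restriction_general (f : M →ₗ[R] N) (g : N →ₗ[R] M) :
    (∀ x ∈ stableIm (g ∘ₗ f), f x ∈ stableIm (f ∘ₗ g)) ∧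
    (∀ x ∈ stableKer (g ∘ₗ f), f x ∈ stableKer (f ∘ₗ g)) ∧
    ∀ hmap : ∀ x ∈ stableIm (g ∘ₗ f), f x ∈ stableIm (f ∘ₗ g),
      (IsNoetherian R M ∨ IsNoetherian R N → Function.Injective (f.restrict hmap)) ∧
      (IsArtinian R M ∨ IsArtinian R N → Function.Surjective (f.restrict hmap)) := by
  have hcomm : (f ∘ₗ g) ∘ₗ f = f ∘ₗ (g ∘ₗ f) := LinearMap.comp_assoc f g f
  refine ⟨Submodule.map_le_iff_le_comap.mp (map_stableIm_le hcomm), stableKer_le_comap hcomm,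
    fun hmap => ⟨fun hMN => ?_, fun hMN => ?_⟩⟩
  · exact (LinearMap.injective_restrict_iff _).mpr (disjoint_stableIm_comp_ker f g hMN)
  · rintro ⟨y, hy⟩
    obtain ⟨x, hx, rfl⟩ := stableIm_comp_le_map f g hMN hy
    exact ⟨⟨x, hx⟩, rfl⟩

end

/-- For `R`-linear maps `f : M → N` and `g : N → M`, `f` maps `Im(g∘f)` into
`Im(f∘g)` and `Ker(g∘f)` into `Ker(f∘g)`; if moreover `M` and `N` have finite length, then the
restriction of `f` to a map `Im(g∘f) → Im(f∘g)` is an isomorphism. -/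
theorem fitting_restriction
    {R M N : Type*} [Ring R] [AddCommGroup M] [Module R M] [AddCommGroup N] [Module R N]
    (f : M →ₗ[R] N) (g : N →ₗ[R] M) :
    (∀ x ∈ stableIm (g ∘ₗ f), f x ∈ stableIm (f ∘ₗ g)) ∧
    (∀ x ∈ stableKer (g ∘ₗ f), f x ∈ stableKer (f ∘ₗ g)) ∧
    (IsFiniteLength R M → IsFiniteLength R N →
      ∀ hmap : ∀ x ∈ stableIm (g ∘ₗ f), f x ∈ stableIm (f ∘ₗ g),
        Function.Bijective (f.restrict hmap)) := by
  obtain ⟨him, hker, hbij⟩ := fitting_restriction_general f g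
  refine ⟨him, hker, fun hM _ hmap => ?_⟩
  obtain ⟨hNoeth, hArt⟩ := isFiniteLength_iff_isNoetherian_isArtinian.mp hM
  exact ⟨(hbij hmap).1 (.inl hNoeth), (hbij hmap).2 (.inl hArt)⟩
end

section
/- Let S and T be orders, let R = S × T, and let (E, (S_ε)_{ε∈E}) and (Z, (T_ζ)_{ζ∈Z}) be gradings of S and T respectively. Define additive subgroups of R indexed by E × Z by R_{(1,1)} = S_1 × T_1, R_{(ε,1)} = S_ε × {0} for ε ≠ 1, R_{(1,ζ)} = {0} × T_ζ for ζ ≠ 1, and R_{(ε,ζ)} = {(0,0)} for ε ≠ 1 and ζ ≠ 1. Then (E × Z, (R_{(ε,ζ)})_{(ε,ζ)}) is a grading of R, and if the two given gradings are universal, then so is this grading of R. -/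
/-- A grading of a commutative ring `R` by a (multiplicatively written) abelian group `Δ`:
a `Δ`-indexed internal direct sum decomposition of `R` into additive subgroups such that
`R_γ · R_δ ⊆ R_{γδ}`. -/
structure Grading (R : Type u) [CommRing R] (Δ : Type v) [CommGroup Δ] where
  comp : Δ → AddSubgroup R
  mul_mem : ∀ ⦃γ δ : Δ⦄ ⦃x y : R⦄, x ∈ comp γ → y ∈ comp δ → x * y ∈ comp (γ * δ)
  isInternal : letI := Classical.decEq Δ; DirectSum.IsInternal comp

/-- A grading is universal if every grading of `R` is obtained from it by pushforward
(`S_ε = Σ_{δ ∈ f⁻¹(ε)} R_δ`) along a unique group homomorphism. -/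
def Grading.IsUniversal {R : Type u} [CommRing R] {Δ : Type v} [CommGroup Δ]
    (g : Grading R Δ) : Prop :=
  ∀ (E : Type v) (_ : CommGroup E) (s : Grading R E),
    ∃! f : Δ →* E, ∀ ε : E, s.comp ε = ⨆ δ ∈ f ⁻¹' {ε}, g.comp δ

/-!
An idempotent `e` of an order has degree one in every grading. Let `H` be the subgroup generated by
the degrees that occur in `e`. By Frobenius, `e = e ^ p` is congruent modulo `p` to an element `a`
supported in `H ^ p`, hence to `a ^ p ^ k` modulo `p ^ (k + 1)` for every `k`, so `e` itself is
supported in `H ^ p`. Thus `H = H ^ p` for all primes `p`, which forces the finitely generated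
group `H` to be trivial.

Applied to `(1, 0)` and `(0, 1)`, this shows that a grading of `S × T` by a group `D` is the same as
a pair of gradings of `S` and `T` by `D`, compatibly with pushforward. Since `E × Z` is the
coproduct of `E` and `Z` in abelian groups, pushing universal gradings of `S` and `T` forward to
`E × Z` and pairing them gives a universal grading of `S × T`.
-/

section ProductSubgroups

variable {M N : Type*} [AddGroup M] [AddGroup N]

theorem addSubgroup_prod_inj {A A' : AddSubgroup M} {B B' : AddSubgroup N} :
    A.prod B = A'.prod B' ↔ A = A' ∧ B = B' := by
  simpa only [SetLike.ext'_iff, AddSubgroup.coe_prod] using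
    Set.prod_eq_prod_iff_of_nonempty ⟨0, zero_mem A, zero_mem B⟩

theorem iSup_addSubgroup_prod {κ : Sort*} (A : κ → AddSubgroup M) (B : κ → AddSubgroup N) :
    ⨆ i, (A i).prod (B i) = (⨆ i, A i).prod (⨆ i, B i) := by
  refine le_antisymm (iSup_le fun i => AddSubgroup.prod_mono (le_iSup A i) (le_iSup B i)) ?_
  rw [AddSubgroup.prod_le_iff, AddSubgroup.map_iSup, AddSubgroup.map_iSup]
  exact ⟨iSup_mono fun i => (AddSubgroup.prod_le_iff.1 le_rfl).1,
    iSup_mono fun i => (AddSubgroup.prod_le_iff.1 le_rfl).2⟩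

theorem disjoint_addSubgroup_prod {A A' : AddSubgroup M} {B B' : AddSubgroup N} :
    Disjoint (A.prod B) (A'.prod B') ↔ Disjoint A A' ∧ Disjoint B B' := by
  have inf_prod : A.prod B ⊓ A'.prod B' = (A ⊓ A').prod (B ⊓ B') :=
    SetLike.coe_injective Set.prod_inter_prod
  simp only [disjoint_iff, inf_prod, AddSubgroup.prod_eq_bot_iff]

end ProductSubgroups

section DirectSums

variable {M N ι : Type*} [AddCommGroup M] [AddCommGroup N]

theorem isInternal_addSubgroup_iff {_ : DecidableEq ι} {A : ι → AddSubgroup M} :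
    DirectSum.IsInternal A ↔ iSupIndep A ∧ ⨆ i, A i = ⊤ := by
  have h := DirectSum.isInternal_submodule_iff_iSupIndep_and_iSup_eq_top
    fun i => AddSubgroup.toIntSubmodule (A i)
  rw [← OrderIso.map_iSup, map_eq_top_iff] at h
  exact h.trans (and_congr_left' (iSupIndep_map_orderIso_iff AddSubgroup.toIntSubmodule))

theorem isInternal_addSubgroup_prod_iff {_ : DecidableEq ι} {A : ι → AddSubgroup M}
    {B : ι → AddSubgroup N} :
    DirectSum.IsInternal (fun i => (A i).prod (B i)) ↔
      DirectSum.IsInternal A ∧ DirectSum.IsInternal B := by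
  simp only [isInternal_addSubgroup_iff, iSupIndep_def, iSup_addSubgroup_prod,
    disjoint_addSubgroup_prod, forall_and, ← AddSubgroup.top_prod_top, addSubgroup_prod_inj]
  tauto

end DirectSums

section Arithmetic

theorem subsingleton_of_prime_smul_surjective {M : Type*} [AddCommGroup M] [Module.Finite ℤ M]
    (h : ∀ p : ℕ, p.Prime → Function.Surjective fun x : M => p • x) : Subsingleton M := by
  have nsmul_surjective : ∀ n : ℕ, n ≠ 0 → Function.Surjective fun x : M => n • x := by
    intro n
    induction n using induction_on_primes with
    | zero => exact fun h0 => absurd rfl h0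
    | one => exact fun _ x => ⟨x, one_smul ℕ x⟩
    | prime_mul p a hp ih =>
      intro hpa
      simpa only [mul_smul, Function.comp_def] using
        (h p hp).comp (ih (right_ne_zero_of_mul hpa))
  -- The determinant trick for `M = 2M` yields an odd, hence nonzero, integer annihilating `M`.
  obtain ⟨r, hr, hrM⟩ := Submodule.exists_sub_one_mem_and_smul_eq_zero_of_fg_of_le_smul
    (Ideal.span {(2 : ℤ)}) (⊤ : Submodule ℤ M) Module.Finite.fg_top fun x _ => by
      obtain ⟨y, rfl⟩ := h 2 Nat.prime_two x
      simpa only [ofNat_smul_eq_nsmul] using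
        Submodule.smul_mem_smul (Ideal.mem_span_singleton_self (2 : ℤ)) (Submodule.mem_top (x := y))
  have hr0 : r ≠ 0 := by
    rintro rfl
    rw [Ideal.mem_span_singleton] at hr
    omega
  refine subsingleton_of_forall_eq 0 fun x => ?_
  obtain ⟨y, rfl⟩ := nsmul_surjective r.natAbs (Int.natAbs_ne_zero.2 hr0) x
  exact natAbs_nsmul_eq_zero.2 (hrM y Submodule.mem_top)

theorem prime_dvd_sum_pow_sub_sum_pow {R ι : Type*} [CommRing R] {p : ℕ} (hp : p.Prime)
    (F : Finset ι) (v : ι → R) : (p : R) ∣ (∑ i ∈ F, v i) ^ p - ∑ i ∈ F, v i ^ p := by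
  classical
  induction F using Finset.induction_on with
  | empty => simp [hp.ne_zero]
  | insert a F ha ih =>
    obtain ⟨r, hr⟩ := exists_add_pow_prime_eq hp (v a) (∑ i ∈ F, v i)
    obtain ⟨c, hc⟩ := ih
    rw [Finset.sum_insert ha, Finset.sum_insert ha, hr]
    exact ⟨c + v a * (∑ i ∈ F, v i) * r, by linear_combination hc⟩

/-- The additive group of `R` is `p`-adically separated for every prime number `p`. This is the
property of orders that forces idempotents to have degree one in every grading. -/
def IsPrimewiseSeparated (R : Type*) [CommRing R] : Prop :=
  ∀ p : ℕ, p.Prime → ∀ x : R, (∀ k : ℕ, (p : R) ^ k ∣ x) → x = 0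

theorem isPrimewiseSeparated_of_free (R : Type*) [CommRing R] [Module.Free ℤ R] :
    IsPrimewiseSeparated R := by
  intro p hp x hx
  let b := Module.Free.chooseBasis ℤ R
  refine b.forall_coord_eq_zero_iff.1 fun i => ?_
  by_contra hxi
  have hfin : FiniteMultiplicity (p : ℤ) (b.coord i x) :=
    Int.finiteMultiplicity_iff.2 ⟨by simpa using hp.ne_one, hxi⟩
  obtain ⟨n, hn⟩ := hfin
  obtain ⟨c, rfl⟩ := hx (n + 1)
  refine hn ⟨b.coord i c, ?_⟩
  have : (p : R) ^ (n + 1) * c = ((p : ℤ) ^ (n + 1)) • c := by simp [zsmul_eq_mul]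
  rw [this, map_smul, smul_eq_mul]

theorem IsPrimewiseSeparated.prod {S T : Type*} [CommRing S] [CommRing T]
    (hS : IsPrimewiseSeparated S) (hT : IsPrimewiseSeparated T) :
    IsPrimewiseSeparated (S × T) := fun p hp x hx =>
  Prod.ext (hS p hp x.1 fun k => by simpa using map_dvd (RingHom.fst S T) (hx k))
    (hT p hp x.2 fun k => by simpa using map_dvd (RingHom.snd S T) (hx k))

end Arithmetic

theorem small_subgroup_closure {G : Type*} [Group G] (U : Set G) [Small.{w} U] :
    Small.{w} (Subgroup.closure U) := by
  let toClosure := FreeGroup.lift fun a : Shrink.{w} U => ((equivShrink U).symm a : G)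
  have hrange : toClosure.range = Subgroup.closure U := by
    rw [FreeGroup.range_lift_eq_closure, ← Function.comp_def,
      (equivShrink U).symm.surjective.range_comp, Subtype.range_coe]
  exact hrange ▸ small_of_surjective toClosure.rangeRestrict_surjective

namespace Grading

section Components

variable {R : Type*} [CommRing R] {D : Type*} [CommGroup D]

theorem ext {s t : Grading R D} (h : s.comp = t.comp) : s = t := by
  cases s
  cases t
  congr

theorem iSupIndep_comp (s : Grading R D) : iSupIndep s.comp :=
  (isInternal_addSubgroup_iff.1 s.isInternal).1

theorem iSup_comp (s : Grading R D) : ⨆ δ, s.comp δ = ⊤ :=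
  (isInternal_addSubgroup_iff.1 s.isInternal).2

theorem eq_of_comp_le {s t : Grading R D} (h : s.comp ≤ t.comp) : s = t :=
  ext ((t.iSupIndep_comp.le_iff_eq_of_iSup_eq_top s.iSup_comp).1 h)

open Classical in
/-- The projection of `R` onto its component of degree `δ`, as an endomorphism of the additive
group of `R`. -/
noncomputable def proj (s : Grading R D) (δ : D) : R →+ R :=
  letI := s.isInternal.chooseDecomposition
  (s.comp δ).subtype.comp <|
    (DFinsupp.evalAddMonoidHom δ).comp (DirectSum.decomposeAddEquiv s.comp).toAddMonoidHom

theorem proj_mem (s : Grading R D) (δ : D) (x : R) : s.proj δ x ∈ s.comp δ :=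
  SetLike.coe_mem _

theorem proj_of_mem_ne (s : Grading R D) {γ δ : D} {x : R} (hx : x ∈ s.comp γ) (h : γ ≠ δ) :
    s.proj δ x = 0 := by
  classical
  let := s.isInternal.chooseDecomposition
  exact DirectSum.decompose_of_mem_ne s.comp hx h

theorem exists_eq_sum_proj (s : Grading R D) (x : R) :
    ∃ F : Finset D, x = ∑ δ ∈ F, s.proj δ x ∧ ∀ δ ∈ F, s.proj δ x ≠ 0 := by
  classical
  let := s.isInternal.chooseDecomposition
  refine ⟨(DirectSum.decompose s.comp x).support,
    (DirectSum.sum_support_decompose s.comp x).symm, fun δ hδ h => ?_⟩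
  exact DFinsupp.mem_support_iff.1 hδ (Subtype.ext h)

theorem proj_eq_zero_of_mem_biSup (s : Grading R D) {I : Set D} {δ : D} {x : R}
    (hx : x ∈ ⨆ γ ∈ I, s.comp γ) (hδ : δ ∉ I) : s.proj δ x = 0 := by
  have : ⨆ γ ∈ I, s.comp γ ≤ (s.proj δ).ker := iSup₂_le fun γ hγ y hy =>
    s.proj_of_mem_ne hy fun h => hδ (h ▸ hγ)
  exact this hx

theorem mem_comp_of_proj_eq_zero (s : Grading R D) {δ : D} {x : R}
    (hx : ∀ γ ≠ δ, s.proj γ x = 0) : x ∈ s.comp δ := by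
  obtain ⟨F, hF, hF0⟩ := s.exists_eq_sum_proj x
  rw [hF]
  refine sum_mem fun γ hγ => ?_
  obtain rfl : γ = δ := by_contra fun h => hF0 γ hγ (hx γ h)
  exact s.proj_mem γ x

theorem disjoint_biSup_comp (s : Grading R D) {I J : Set D} (hIJ : Disjoint I J) :
    Disjoint (⨆ δ ∈ I, s.comp δ) (⨆ δ ∈ J, s.comp δ) := by
  refine AddSubgroup.disjoint_def.2 fun {x} hI hJ => ?_
  obtain ⟨F, hF, -⟩ := s.exists_eq_sum_proj x
  refine hF.trans (Finset.sum_eq_zero fun δ _ => ?_)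
  by_cases hδ : δ ∈ I
  · exact s.proj_eq_zero_of_mem_biSup hJ (hIJ.notMem_of_mem_left hδ)
  · exact s.proj_eq_zero_of_mem_biSup hI hδ

theorem pow_mem_comp (s : Grading R D) {δ : D} {x : R} (hx : x ∈ s.comp δ) {n : ℕ} (hn : n ≠ 0) :
    x ^ n ∈ s.comp (δ ^ n) := by
  replace hn : 1 ≤ n := Nat.one_le_iff_ne_zero.2 hn
  induction n, hn using Nat.le_induction with
  | base => simpa only [pow_one] using hx
  | succ n _ ih => simpa only [pow_succ] using s.mul_mem ih hx

end Components

section Pushforward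

variable {R : Type*} [CommRing R] {C D E : Type*} [CommGroup C] [CommGroup D] [CommGroup E]

/-- The pushforward of a grading along a group homomorphism. -/
def map (s : Grading R D) (f : D →* E) : Grading R E where
  comp ε := ⨆ δ ∈ f ⁻¹' {ε}, s.comp δ
  mul_mem := by
    intro ε ε' x y hx hy
    have mul_mem_of_homogeneous {δ : D} (hδ : f δ = ε) {x : R} (hx : x ∈ s.comp δ) :
        x * y ∈ ⨆ δ ∈ f ⁻¹' {ε * ε'}, s.comp δ := by
      have : ⨆ δ ∈ f ⁻¹' {ε'}, s.comp δ ≤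
          (⨆ δ ∈ f ⁻¹' {ε * ε'}, s.comp δ).comap (AddMonoidHom.mulLeft x) :=
        iSup₂_le fun δ' hδ' z hz => AddSubgroup.mem_iSup_of_mem (δ * δ') <|
          AddSubgroup.mem_iSup_of_mem (by simp_all) (s.mul_mem hx hz)
      exact this hy
    have : ⨆ δ ∈ f ⁻¹' {ε}, s.comp δ ≤
        (⨆ δ ∈ f ⁻¹' {ε * ε'}, s.comp δ).comap (AddMonoidHom.mulRight y) :=
      iSup₂_le fun δ hδ z hz => mul_mem_of_homogeneous hδ hz
    exact this hx
  isInternal := by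
    refine isInternal_addSubgroup_iff.2 ⟨fun ε => ?_, ?_⟩
    · refine (s.disjoint_biSup_comp disjoint_compl_right).mono_right ?_
      exact iSup₂_le fun ε' hε' => biSup_mono fun δ hδ h => hε' (hδ.symm.trans h)
    · refine top_unique (s.iSup_comp.ge.trans (iSup_le fun δ => ?_))
      exact le_iSup_of_le (f δ) (le_iSup₂_of_le δ rfl le_rfl)

theorem comp_le_comp_map (s : Grading R D) (f : D →* E) (δ : D) :
    s.comp δ ≤ (s.map f).comp (f δ) :=
  le_iSup₂_of_le δ rfl le_rfl

theorem map_eq_iff {s : Grading R D} {f : D →* E} {t : Grading R E} :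
    s.map f = t ↔ ∀ δ, s.comp δ ≤ t.comp (f δ) := by
  refine ⟨?_, fun h => eq_of_comp_le fun ε => iSup₂_le ?_⟩
  · rintro rfl
    exact s.comp_le_comp_map f
  · rintro δ rfl
    exact h δ

theorem map_id (s : Grading R D) : s.map (MonoidHom.id D) = s :=
  map_eq_iff.2 fun _ => le_rfl

theorem map_map (s : Grading R C) (f : C →* D) (g : D →* E) :
    (s.map f).map g = s.map (g.comp f) :=
  (map_eq_iff.2 fun γ => (s.comp_le_comp_map f γ).trans
    ((s.map f).comp_le_comp_map g (f γ))).symm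

theorem comp_map_apply_of_injective (s : Grading R D) {f : D →* E} (hf : Function.Injective f)
    (δ : D) : (s.map f).comp (f δ) = s.comp δ := by
  simp [map, hf.eq_iff]

theorem comp_map_of_notMem_range (s : Grading R D) {f : D →* E} {ε : E} (hε : ε ∉ Set.range f) :
    (s.map f).comp ε = ⊥ := by
  simp only [map, iSup_eq_bot]
  exact fun δ hδ => absurd ⟨δ, hδ⟩ hε

theorem isUniversal_iff.{u, v} {R : Type u} [CommRing R] {Δ : Type v} [CommGroup Δ]
    {g : Grading R Δ} :
    g.IsUniversal ↔
      ∀ (E : Type v) (_ : CommGroup E) (s : Grading R E), ∃! f : Δ →* E, g.map f = s := by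
  have map_eq_iff_forall {E : Type v} [CommGroup E] (s : Grading R E) (f : Δ →* E) :
      g.map f = s ↔ ∀ ε, s.comp ε = ⨆ δ ∈ f ⁻¹' {ε}, g.comp δ :=
    ⟨fun h _ => h ▸ rfl, fun h => ext (funext fun ε => (h ε).symm)⟩
  simp only [IsUniversal, map_eq_iff_forall]

end Pushforward

section Support

variable {R : Type*} [CommRing R] {D E : Type*} [CommGroup D] [CommGroup E]

/-- The set of degrees in which a grading is nonzero. -/
def support (s : Grading R D) : Set D := {δ | s.comp δ ≠ ⊥}

/-- A grading regarded as a grading by a subgroup that contains its support. -/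
def restrict (s : Grading R D) (H : Subgroup D) (hH : s.support ⊆ H) : Grading R H where
  comp δ := s.comp δ
  mul_mem _ _ _ _ hx hy := s.mul_mem hx hy
  isInternal := by
    refine isInternal_addSubgroup_iff.2 ⟨s.iSupIndep_comp.comp Subtype.val_injective, ?_⟩
    refine top_unique (s.iSup_comp.ge.trans (iSup_le fun δ => ?_))
    by_cases hδ : s.comp δ = ⊥
    · exact hδ ▸ bot_le
    · exact le_iSup (fun δ : H => s.comp δ) ⟨δ, hH hδ⟩

theorem map_restrict (s : Grading R D) (H : Subgroup D) (hH : s.support ⊆ H) :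
    (s.restrict H hH).map H.subtype = s :=
  map_eq_iff.2 fun _ => le_rfl

theorem eqOn_support_of_map_eq {s : Grading R D} {f g : D →* E} (h : s.map f = s.map g) :
    s.support.EqOn f g := by
  intro δ hδ
  by_contra hne
  have hf : s.comp δ ≤ (s.map g).comp (f δ) := h ▸ s.comp_le_comp_map f δ
  exact hδ <| le_bot_iff.1 <|
    (s.map g).iSupIndep_comp.pairwiseDisjoint hne hf (s.comp_le_comp_map g δ)

theorem IsUniversal.closure_support {g : Grading R D} (hg : g.IsUniversal) :
    Subgroup.closure g.support = ⊤ := by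
  set H := Subgroup.closure g.support
  let g' := g.restrict H Subgroup.subset_closure
  have hg' : g'.map H.subtype = g := g.map_restrict H _
  rw [isUniversal_iff] at hg
  obtain ⟨f, hf, -⟩ := hg H inferInstance g'
  have retraction : H.subtype.comp f = MonoidHom.id D :=
    (hg D inferInstance g).unique (by rw [← map_map, hf, hg']) g.map_id
  refine (Subgroup.eq_top_iff' H).2 fun δ => ?_
  have hδ : (f δ : D) = δ := DFunLike.congr_fun retraction δ
  exact hδ ▸ (f δ).2

theorem small_support (s : Grading R D) [Small.{w} R] : Small.{w} s.support :=
  small_of_injective (f := fun δ : s.support => (s.comp δ : Set R)) fun _ _ h =>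
    Subtype.ext (s.iSupIndep_comp.injOn (Subtype.prop _) (Subtype.prop _) (SetLike.coe_injective h))

theorem exists_map_eq_of_small (s : Grading R D) [Small.{w} R] :
    ∃ (E : Type w) (_ : CommGroup E) (f : E →* D) (t : Grading R E), t.map f = s := by
  let H := Subgroup.closure s.support
  have := s.small_support
  have : Small.{w} H := small_subgroup_closure s.support
  let e : Shrink.{w} H ≃* H := Shrink.mulEquiv
  refine ⟨Shrink.{w} H, inferInstance, H.subtype.comp e.toMonoidHom,
    (s.restrict H Subgroup.subset_closure).map e.symm.toMonoidHom, ?_⟩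
  have e_comp_symm : e.toMonoidHom.comp e.symm.toMonoidHom = MonoidHom.id H :=
    e.coe_monoidHom_comp_coe_monoidHom_symm
  rw [map_map, MonoidHom.comp_assoc, e_comp_symm, MonoidHom.comp_id, map_restrict]

/-- `IsUniversal` only tests gradings by groups in the universe of `E`. As the support of `s` is no
larger than `R`, the grading `s` descends to such a group, and `D` may live in any universe. -/
theorem IsUniversal.existsUnique_map_eq {E : Type w} [CommGroup E] [Small.{w} R]
    {g : Grading R E} (hg : g.IsUniversal) (s : Grading R D) : ∃! f : E →* D, g.map f = s := by
  obtain ⟨E', _, i, t, rfl⟩ : ∃ (E' : Type w) (_ : CommGroup E') (i : E' →* D)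
    (t : Grading R E'), t.map i = s := s.exists_map_eq_of_small
  obtain ⟨f, rfl, -⟩ := isUniversal_iff.1 hg E' inferInstance t
  rw [map_map]
  exact ⟨i.comp f, rfl, fun f' hf' =>
    MonoidHom.eq_of_eqOn_dense hg.closure_support (eqOn_support_of_map_eq hf')⟩

end Support

section Idempotents

variable {R : Type*} [CommRing R] {D : Type*} [CommGroup D]

theorem mem_comp_of_forall_pow_dvd_sub (s : Grading R D) (hR : IsPrimewiseSeparated R) {p : ℕ}
    (hp : p.Prime) {δ : D} {x : R} (hx : ∀ k : ℕ, ∃ a ∈ s.comp δ, (p : R) ^ k ∣ x - a) :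
    x ∈ s.comp δ := by
  refine s.mem_comp_of_proj_eq_zero fun γ hγ => hR p hp _ fun k => ?_
  obtain ⟨a, ha, c, hc⟩ := hx k
  have proj_sub : s.proj γ (x - a) = s.proj γ x := by
    rw [map_sub, s.proj_of_mem_ne ha hγ.symm, sub_zero]
  refine ⟨s.proj γ c, ?_⟩
  rw [← proj_sub, hc, ← Nat.cast_pow, ← nsmul_eq_mul, ← nsmul_eq_mul, map_nsmul]

theorem mem_comp_one_of_prime_dvd_sub (s : Grading R D) (hR : IsPrimewiseSeparated R) {p : ℕ}
    (hp : p.Prime) {e a : R} (he : IsIdempotentElem e) (ha : a ∈ s.comp 1) (h : (p : R) ∣ e - a) :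
    e ∈ s.comp 1 := by
  refine s.mem_comp_of_forall_pow_dvd_sub hR hp fun k => ⟨a ^ p ^ k, ?_, ?_⟩
  · simpa only [one_pow] using s.pow_mem_comp ha (pow_ne_zero k hp.ne_zero)
  · have := dvd_sub_pow_of_dvd_sub h k
    rw [he.pow_eq (pow_ne_zero k hp.ne_zero)] at this
    exact (pow_dvd_pow _ k.le_succ).trans this

/-- Frobenius: modulo `p`, the idempotent `e = e ^ p` is the sum of the `p`-th powers of its
components, whose degrees are `p`-th powers. -/
theorem mem_map_powMonoidHom_of_proj_ne_zero (s : Grading R D) (hR : IsPrimewiseSeparated R)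
    {p : ℕ} (hp : p.Prime) {e : R} (he : IsIdempotentElem e) {F : Finset D}
    (hF : e = ∑ δ ∈ F, s.proj δ e) {γ : D} (hγ : s.proj γ e ≠ 0) :
    γ ∈ (Subgroup.closure (F : Set D)).map (powMonoidHom p) := by
  set P := (Subgroup.closure (F : Set D)).map (powMonoidHom p)
  let t := s.map (QuotientGroup.mk' P)
  let a := ∑ δ ∈ F, s.proj δ e ^ p
  have ha : a ∈ t.comp 1 := by
    refine sum_mem fun δ hδ => ?_
    have hδP : QuotientGroup.mk' P (δ ^ p) = 1 :=
      (QuotientGroup.eq_one_iff _).2 ⟨δ, Subgroup.subset_closure hδ, rfl⟩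
    rw [← hδP]
    exact s.comp_le_comp_map _ _ (s.pow_mem_comp (s.proj_mem δ e) hp.ne_zero)
  have e_congr_a : (p : R) ∣ e - a := by
    have := prime_dvd_sum_pow_sub_sum_pow hp F fun δ => s.proj δ e
    rwa [← hF, he.pow_eq hp.ne_zero] at this
  have he1 : e ∈ t.comp 1 := t.mem_comp_one_of_prime_dvd_sub hR hp he ha e_congr_a
  by_contra hγP
  exact hγ (s.proj_eq_zero_of_mem_biSup he1 fun h => hγP ((QuotientGroup.eq_one_iff γ).1 h))

theorem mem_comp_one_of_isIdempotentElem (s : Grading R D) (hR : IsPrimewiseSeparated R) {e : R}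
    (he : IsIdempotentElem e) : e ∈ s.comp 1 := by
  obtain ⟨F, hF, hF0⟩ := s.exists_eq_sum_proj e
  set H := Subgroup.closure (F : Set D)
  have pow_surjective (p : ℕ) (hp : p.Prime) (x : H) : ∃ y : H, y ^ p = x := by
    have : H ≤ H.map (powMonoidHom p) := (Subgroup.closure_le _).2 fun δ hδ =>
      s.mem_map_powMonoidHom_of_proj_ne_zero hR hp he hF (hF0 δ hδ)
    obtain ⟨y, hy, hyx⟩ := this x.2
    exact ⟨⟨y, hy⟩, Subtype.ext hyx⟩
  have : Group.FG H := Group.closure_finset_fg F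
  have : Module.Finite ℤ (Additive H) := Module.Finite.iff_addGroup_fg.2 (GroupFG.iff_add_fg.1 this)
  have : Subsingleton (Additive H) := subsingleton_of_prime_smul_surjective pow_surjective
  rw [hF]
  refine sum_mem fun δ hδ => ?_
  obtain rfl : δ = 1 := congrArg Subtype.val
    (Subsingleton.elim (α := Additive H) ⟨δ, Subgroup.subset_closure hδ⟩ ⟨1, H.one_mem⟩)
  exact s.proj_mem 1 e

end Idempotents

section Products

variable {S T : Type*} [CommRing S] [CommRing T] {D D' E Z : Type*}
  [CommGroup D] [CommGroup D'] [CommGroup E] [CommGroup Z]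

/-- The componentwise product of two gradings by the same group. -/
def prod (s : Grading S D) (t : Grading T D) : Grading (S × T) D where
  comp δ := (s.comp δ).prod (t.comp δ)
  mul_mem _ _ _ _ hx hy := ⟨s.mul_mem hx.1 hy.1, t.mul_mem hx.2 hy.2⟩
  isInternal := isInternal_addSubgroup_prod_iff.2 ⟨s.isInternal, t.isInternal⟩

theorem prod_inj {s s' : Grading S D} {t t' : Grading T D} :
    s.prod t = s'.prod t' ↔ s = s' ∧ t = t' := by
  refine ⟨fun h => ?_, fun ⟨hs, ht⟩ => hs ▸ ht ▸ rfl⟩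
  have comp_eq (δ : D) := addSubgroup_prod_inj.1 (congrFun (congrArg comp h) δ)
  exact ⟨ext (funext fun δ => (comp_eq δ).1), ext (funext fun δ => (comp_eq δ).2)⟩

theorem map_prod (s : Grading S D) (t : Grading T D) (f : D →* D') :
    (s.prod t).map f = (s.map f).prod (t.map f) :=
  map_eq_iff.2 fun δ => AddSubgroup.prod_mono (s.comp_le_comp_map f δ) (t.comp_le_comp_map f δ)

theorem exists_eq_prod (s : Grading (S × T) D) (hS : ((1, 0) : S × T) ∈ s.comp 1)
    (hT : ((0, 1) : S × T) ∈ s.comp 1) :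
    ∃ (sS : Grading S D) (sT : Grading T D), s = sS.prod sT := by
  let A (δ : D) := (s.comp δ).comap (AddMonoidHom.inl S T)
  let B (δ : D) := (s.comp δ).comap (AddMonoidHom.inr S T)
  have inl_mem {δ : D} {x : S × T} (hx : x ∈ s.comp δ) : (x.1, 0) ∈ s.comp δ := by
    simpa [Prod.mul_def] using s.mul_mem hS hx
  have inr_mem {δ : D} {x : S × T} (hx : x ∈ s.comp δ) : (0, x.2) ∈ s.comp δ := by
    simpa [Prod.mul_def] using s.mul_mem hT hx
  have comp_eq : s.comp = fun δ => (A δ).prod (B δ) := by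
    funext δ
    refine le_antisymm (fun x hx => ⟨inl_mem hx, inr_mem hx⟩) fun x ⟨hA, hB⟩ => ?_
    simpa using add_mem (AddSubgroup.mem_comap.1 hA) (AddSubgroup.mem_comap.1 hB)
  obtain ⟨hA, hB⟩ := isInternal_addSubgroup_prod_iff.1 (comp_eq ▸ s.isInternal)
  let sS : Grading S D := ⟨A, fun γ δ x y hx hy => by simpa [A] using s.mul_mem hx hy, hA⟩
  let sT : Grading T D := ⟨B, fun γ δ x y hx hy => by simpa [B] using s.mul_mem hx hy, hB⟩
  exact ⟨sS, sT, ext comp_eq⟩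

/-- The grading of `S × T` by `E × Z` induced by a grading of `S` by `E` and a grading of `T`
by `Z`: both are pushed forward to `E × Z` along the inclusions of the factors, where they can be
multiplied componentwise. -/
def externalProd (gS : Grading S E) (gT : Grading T Z) : Grading (S × T) (E × Z) :=
  (gS.map (MonoidHom.inl E Z)).prod (gT.map (MonoidHom.inr E Z))

open Classical in
theorem comp_map_inl (s : Grading S E) (p : E × Z) :
    (s.map (MonoidHom.inl E Z)).comp p = if p.2 = 1 then s.comp p.1 else ⊥ := by
  obtain ⟨ε, ζ⟩ := p
  split_ifs with h
  · obtain rfl : ζ = 1 := h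
    exact s.comp_map_apply_of_injective (Prod.mk_left_injective 1) ε
  · exact s.comp_map_of_notMem_range fun ⟨_, hε⟩ => h (congrArg Prod.snd hε).symm

open Classical in
theorem comp_map_inr (t : Grading T Z) (p : E × Z) :
    (t.map (MonoidHom.inr E Z)).comp p = if p.1 = 1 then t.comp p.2 else ⊥ := by
  obtain ⟨ε, ζ⟩ := p
  split_ifs with h
  · obtain rfl : ε = 1 := h
    exact t.comp_map_apply_of_injective (Prod.mk_right_injective 1) ζ
  · exact t.comp_map_of_notMem_range fun ⟨_, hζ⟩ => h (congrArg Prod.fst hζ).symm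

open Classical in
theorem comp_externalProd (gS : Grading S E) (gT : Grading T Z) (p : E × Z) :
    (gS.externalProd gT).comp p =
      if p.1 = 1 ∧ p.2 = 1 then (gS.comp 1).prod (gT.comp 1)
      else if p.2 = 1 then (gS.comp p.1).prod ⊥
      else if p.1 = 1 then AddSubgroup.prod ⊥ (gT.comp p.2)
      else ⊥ := by
  have comp_eq : (gS.externalProd gT).comp p = AddSubgroup.prod
      (if p.2 = 1 then gS.comp p.1 else ⊥) (if p.1 = 1 then gT.comp p.2 else ⊥) :=
    congrArg₂ AddSubgroup.prod (gS.comp_map_inl p) (gT.comp_map_inr p)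
  rw [comp_eq]
  by_cases h₁ : p.1 = 1 <;> by_cases h₂ : p.2 = 1 <;> simp [h₁, h₂, AddSubgroup.bot_prod_bot]

theorem map_externalProd_eq_prod_iff {gS : Grading S E} {gT : Grading T Z} {k : E × Z →* D}
    {sS : Grading S D} {sT : Grading T D} :
    (gS.externalProd gT).map k = sS.prod sT ↔
      gS.map (k.comp (MonoidHom.inl E Z)) = sS ∧ gT.map (k.comp (MonoidHom.inr E Z)) = sT := by
  rw [externalProd, map_prod, map_map, map_map, prod_inj]

theorem IsUniversal.externalProd {E : Type w} {Z : Type x} [CommGroup E] [CommGroup Z]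
    [Small.{w} S] [Small.{x} T] (hS : IsPrimewiseSeparated S) (hT : IsPrimewiseSeparated T)
    {gS : Grading S E} {gT : Grading T Z} (hgS : gS.IsUniversal) (hgT : gT.IsUniversal) :
    (gS.externalProd gT).IsUniversal := by
  refine isUniversal_iff.2 fun D _ s => ?_
  obtain ⟨sS, sT, rfl⟩ := s.exists_eq_prod
    (s.mem_comp_one_of_isIdempotentElem (hS.prod hT) (by simp [IsIdempotentElem]))
    (s.mem_comp_one_of_isIdempotentElem (hS.prod hT) (by simp [IsIdempotentElem]))
  obtain ⟨f, hf, f_unique⟩ := hgS.existsUnique_map_eq sS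
  obtain ⟨h, hh, h_unique⟩ := hgT.existsUnique_map_eq sT
  simp only [map_externalProd_eq_prod_iff]
  refine ⟨f.coprod h, ⟨by simpa using hf, by simpa using hh⟩, fun k ⟨hkS, hkT⟩ => ?_⟩
  rw [← f_unique _ hkS, ← h_unique _ hkT, MonoidHom.coprod_unique]

end Products

end Grading

open Classical in
theorem product_grading_general
    {S : Type u} [CommRing S] [Small.{w} S] (hS : IsPrimewiseSeparated S)
    {T : Type v} [CommRing T] [Small.{x} T] (hT : IsPrimewiseSeparated T)
    {E : Type w} [CommGroup E] {Z : Type x} [CommGroup Z]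
    (gS : Grading S E) (gT : Grading T Z) :
    ∃ g : Grading (S × T) (E × Z),
      (∀ p : E × Z, g.comp p =
        if p.1 = 1 ∧ p.2 = 1 then (gS.comp 1).prod (gT.comp 1)
        else if p.2 = 1 then (gS.comp p.1).prod ⊥
        else if p.1 = 1 then AddSubgroup.prod ⊥ (gT.comp p.2)
        else ⊥) ∧
      (gS.IsUniversal → gT.IsUniversal → g.IsUniversal) :=
  ⟨gS.externalProd gT, gS.comp_externalProd gT, fun hgS hgT => hgS.externalProd hS hT hgT⟩

open Classical in
/-- Let `S` and `T` be orders, `R = S × T`, and let gradings of `S` by `E`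
and of `T` by `Z` be given. Then the family over `E × Z` given by `R_{(1,1)} = S_1 × T_1`,
`R_{(ε,1)} = S_ε × 0` (`ε ≠ 1`), `R_{(1,ζ)} = 0 × T_ζ` (`ζ ≠ 1`) and `R_{(ε,ζ)} = 0`
otherwise, is a grading of `R`; and if both given gradings are universal, so is this one. -/
theorem product_grading
    {S : Type u} [CommRing S] [Module.Free ℤ S] [Module.Finite ℤ S]
    {T : Type v} [CommRing T] [Module.Free ℤ T] [Module.Finite ℤ T]
    {E : Type w} [CommGroup E] {Z : Type x} [CommGroup Z]
    (gS : Grading S E) (gT : Grading T Z) :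
    ∃ g : Grading (S × T) (E × Z),
      (∀ p : E × Z, g.comp p =
        if p.1 = 1 ∧ p.2 = 1 then (gS.comp 1).prod (gT.comp 1)
        else if p.2 = 1 then (gS.comp p.1).prod ⊥
        else if p.1 = 1 then AddSubgroup.prod ⊥ (gT.comp p.2)
        else ⊥) ∧
      (gS.IsUniversal → gT.IsUniversal → g.IsUniversal) := by
  have : Countable S := Finsupp.Countable.of_moduleFinite (R := ℤ)
  have : Countable T := Finsupp.Countable.of_moduleFinite (R := ℤ)
  exact product_grading_general (isPrimewiseSeparated_of_free S) (isPrimewiseSeparated_of_free T)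
    gS gT
end

section
/- Let R be a connected order, and let (A,G), (B,H) ∈ GpRg(R) be such that (B,H) ≤ (A,G), i.e., H ⊆ G and A ⊆ B. Set J = G ∩ μ(B). Then the multiplication map J × H → G is a group isomorphism, and the natural ring homomorphism A[J] → B is an isomorphism. -/
/-- The subgroup `μ(B)` of roots of unity of a subring `B ⊆ R`, viewed inside `Rˣ`. -/
def torsionUnitsIn {R : Type*} [CommRing R] (B : Subring R) : Subgroup Rˣ where
  carrier := {u : Rˣ | IsOfFinOrder u ∧ (u : R) ∈ B}
  one_mem' := ⟨IsOfFinOrder.one, B.one_mem⟩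
  mul_mem' := by
    rintro a b ⟨ha1, ha2⟩ ⟨hb1, hb2⟩
    exact ⟨ha1.mul hb1, by simpa using B.mul_mem ha2 hb2⟩
  inv_mem' := by
    rintro u ⟨hu1, hu2⟩
    refine ⟨hu1.inv, ?_⟩
    obtain ⟨n, hn, hun⟩ := isOfFinOrder_iff_pow_eq_one.mp hu1
    have h2 : u ^ (n - 1) * u = 1 := by
      rw [← pow_succ, Nat.sub_add_cancel hn]
      exact hun
    rw [inv_eq_of_mul_eq_one_left h2]
    simpa using B.pow_mem hu2 (n - 1)

lemma card_le_sum_of_one_le_prod {ι : Type*} {s : Finset ι} {f : ι → ℝ} (hf : ∀ i ∈ s, 0 < f i)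
    (h : 1 ≤ ∏ i ∈ s, f i) : (s.card : ℝ) ≤ ∑ i ∈ s, f i := by
  have hlog : 0 ≤ ∑ i ∈ s, Real.log (f i) := by
    rw [← Real.log_prod fun i hi ↦ (hf i hi).ne']
    exact Real.log_nonneg h
  have hsub : ∑ i ∈ s, Real.log (f i) ≤ ∑ i ∈ s, (f i - 1) :=
    Finset.sum_le_sum fun i hi ↦ Real.log_le_sub_one_of_pos (hf i hi)
  rw [Finset.sum_sub_distrib, Finset.sum_const, nsmul_one] at hsub
  linarith

section RingHom

variable {R : Type*} [CommRing R]

instance finite_ringHom {K : Type*} [Field K] [Module.Finite ℤ R] : Finite (R →+* K) :=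
  Finite.of_equiv (R →ₐ[ℤ] K) (RingHom.equivIntAlgHom R K).symm

lemma exists_intCast_eq_prod_ringHom_of_isGalois {L : Type*} [Field L] [DecidableEq L]
    [Algebra ℚ L] [IsGalois ℚ L] [Fintype (R →+* L)] {a : R} (ha : IsIntegral ℤ a) :
    ∃ n : ℤ, (n : L) = ∏ σ : R →+* L with σ a ≠ 0, σ a := by
  set P := ∏ σ : R →+* L with σ a ≠ 0, σ a with hP
  have hfixed (g : Gal(L/ℚ)) : g P = P := by
    have hbij : Function.Bijective (RingHom.comp (g : L →+* L) : (R →+* L) → (R →+* L)) :=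
      Finite.injective_iff_bijective.1 fun _ _ ↦ (RingHom.cancel_left g.injective).1
    calc g P = ∏ σ : R →+* L, if g (σ a) ≠ 0 then g (σ a) else 1 := by
          simp [hP, Finset.prod_filter, map_prod, apply_ite g]
      _ = P := by
          rw [hP, Finset.prod_filter]
          exact hbij.prod_comp fun σ ↦ if σ a ≠ 0 then σ a else 1
  obtain ⟨q, hq⟩ := (InfiniteGalois.mem_range_algebraMap_iff_fixed P).2 hfixed
  have hint : IsIntegral ℤ (algebraMap ℚ L q) :=
    hq ▸ IsIntegral.prod _ fun σ _ ↦ ha.map σ.toIntAlgHom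
  obtain ⟨n, rfl⟩ := IsIntegrallyClosed.isIntegral_iff.1
    ((isIntegral_algebraMap_iff (algebraMap ℚ L).injective).1 hint)
  exact ⟨n, by simpa using hq⟩

open scoped Classical in
lemma exists_intCast_eq_prod_ringHom_complex [Algebra.IsIntegral ℤ R] [Fintype (R →+* ℂ)] (a : R) :
    ∃ n : ℤ, (n : ℂ) = ∏ σ : R →+* ℂ with σ a ≠ 0, σ a := by
  let L := algebraicClosure ℚ ℂ
  -- `IsAlgClosure ℚ L` is not known for the instance `DivisionRing.toRatAlgebra` found by default.
  let _ : Algebra ℚ L := L.algebra'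
  have : IsGalois ℚ L := IsAlgClosure.isGalois ℚ L
  have hmem (σ : R →+* ℂ) (x : R) : σ x ∈ L := by
    have : IsAlgebraic ℤ (σ x) := ((Algebra.IsIntegral.isIntegral x).map σ.toIntAlgHom).isAlgebraic
    exact mem_algebraicClosure_iff.2 (this.extendScalars Int.cast_injective)
  have hbij : Function.Bijective (RingHom.comp (algebraMap L ℂ) : (R →+* L) → (R →+* ℂ)) :=
    ⟨fun _ _ ↦ (RingHom.cancel_left (algebraMap L ℂ).injective).1,
      fun σ ↦ ⟨σ.codRestrict L (hmem σ), by ext; rfl⟩⟩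
  have : Fintype (R →+* L) := Fintype.ofInjective _ hbij.1
  obtain ⟨n, hn⟩ := exists_intCast_eq_prod_ringHom_of_isGalois (L := L)
    (Algebra.IsIntegral.isIntegral (R := ℤ) a)
  refine ⟨n, ?_⟩
  rw [← map_intCast (algebraMap L ℂ), hn, Finset.prod_filter, Finset.prod_filter, map_prod,
    ← hbij.prod_comp]
  refine Finset.prod_congr rfl fun σ _ ↦ ?_
  simp [apply_ite (algebraMap L ℂ)]

open scoped Classical in
lemma card_le_sum_norm_ringHom [Algebra.IsIntegral ℤ R] [Fintype (R →+* ℂ)] (a : R) :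
    ({σ : R →+* ℂ | σ a ≠ 0} : Finset _).card ≤ ∑ σ : R →+* ℂ with σ a ≠ 0, ‖σ a‖ := by
  refine card_le_sum_of_one_le_prod (fun σ hσ ↦ norm_pos_iff.2 (Finset.mem_filter.1 hσ).2) ?_
  obtain ⟨n, hn⟩ := exists_intCast_eq_prod_ringHom_complex a
  have hn₀ : n ≠ 0 := by
    rintro rfl
    exact Finset.prod_ne_zero_iff.2 (fun σ hσ ↦ (Finset.mem_filter.1 hσ).2)
      (hn.symm.trans Int.cast_zero)
  rw [← norm_prod, ← hn, Complex.norm_intCast]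
  exact_mod_cast Int.one_le_abs hn₀

lemma isNilpotent_of_forall_ringHom_eq_zero [Algebra.IsIntegral ℤ R] [Module.IsTorsionFree ℤ R]
    (K : Type*) [Field K] [CharZero K] [IsAlgClosed K] {a : R} (h : ∀ σ : R →+* K, σ a = 0) :
    IsNilpotent a := by
  rw [← mem_nilradical, nilradical, ← Ideal.sInf_minimalPrimes, Ideal.mem_sInf]
  intro P hP
  have : P.IsPrime := hP.1.1
  -- Elements of a minimal prime are zero divisors, whereas non-zero integers are not.
  have hP₀ {n : ℤ} (hn : n ≠ 0) : (n : R ⧸ P) ≠ 0 := by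
    rw [← map_intCast (Ideal.Quotient.mk P), Ne, Ideal.Quotient.eq_zero_iff_mem]
    refine fun hnP ↦ notMem_nonZeroDivisors_of_mem_mem_minimalPrimes hnP hP ?_
    refine mem_nonZeroDivisors_iff_left.2 fun x hx ↦ ?_
    rwa [← zsmul_eq_mul, smul_eq_zero_iff_right hn] at hx
  have : CharZero (R ⧸ P) :=
    charZero_of_inj_zero fun n hn ↦ by_contra fun hn₀ ↦
      hP₀ (Nat.cast_ne_zero.2 hn₀) (by simpa using hn)
  let f : R ⧸ P →ₐ[ℤ] K := IsAlgClosed.lift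
  have hf : Function.Injective f := by
    refine (RingHom.injective_iff_ker_eq_bot f).2 (Ideal.eq_bot_of_comap_eq_bot (R := ℤ) ?_)
    ext n
    simp
  have haP : f (Ideal.Quotient.mk P a) = 0 := h (f.toRingHom.comp (Ideal.Quotient.mk P))
  exact Ideal.Quotient.eq_zero_iff_mem.1 ((map_eq_zero_iff f hf).1 haP)

lemma sum_norm_sq_add_norm_sq_sub_one_eq_zero [Fintype (R →+* ℂ)] {x y : R}
    (hone : ∀ σ : R →+* ℂ, ‖σ (x + y)‖ = 1)
    (horth : ∑ σ : R →+* ℂ, σ x * starRingEnd ℂ (σ y) = 0) :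
    ∑ σ : R →+* ℂ, (‖σ x‖ ^ 2 + ‖σ y‖ ^ 2 - 1) = 0 := by
  have hσ (σ : R →+* ℂ) :
      ‖σ x‖ ^ 2 + ‖σ y‖ ^ 2 - 1 = -2 * (σ x * starRingEnd ℂ (σ y)).re := by
    have := Complex.normSq_add (σ x) (σ y)
    simp only [Complex.normSq_eq_norm_sq, ← map_add, hone] at this
    linarith
  simp_rw [hσ, ← Finset.mul_sum, ← Complex.re_sum, horth, Complex.zero_re, mul_zero]

lemma isNilpotent_mul_of_orthogonal [Algebra.IsIntegral ℤ R] [Module.IsTorsionFree ℤ R]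
    [Fintype (R →+* ℂ)] {x y : R} (hone : ∀ σ : R →+* ℂ, ‖σ (x + y)‖ = 1)
    (horth : ∑ σ : R →+* ℂ, σ x * starRingEnd ℂ (σ y) = 0) : IsNilpotent (x * y) := by
  classical
  have hle (σ : R →+* ℂ) :
      (if σ (x * y) ≠ 0 then 2 * ‖σ (x * y)‖ - 1 else 0) ≤ ‖σ x‖ ^ 2 + ‖σ y‖ ^ 2 - 1 := by
    split_ifs with hxy
    · rw [map_mul, norm_mul, ← mul_assoc]
      gcongr
      exact two_mul_le_add_sq _ _
    · have := hone σ
      rcases mul_eq_zero.1 ((map_mul σ x y).symm.trans (not_not.1 hxy)) with h | h <;> simp_all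
  -- Summed up, `hle` bounds the average of the non-zero `‖σ (x * y)‖` by `1 / 2`.
  have hsum := Finset.sum_le_sum fun σ (_ : σ ∈ Finset.univ) ↦ hle σ
  rw [sum_norm_sq_add_norm_sq_sub_one_eq_zero hone horth, ← Finset.sum_filter,
    Finset.sum_sub_distrib, ← Finset.mul_sum, Finset.sum_const, nsmul_one] at hsum
  have hcard : ({σ : R →+* ℂ | σ (x * y) ≠ 0} : Finset _).card = 0 := by
    have := card_le_sum_norm_ringHom (x * y)
    exact Nat.le_zero.1 (Nat.cast_le (α := ℝ).1 (by push_cast; linarith))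
  refine isNilpotent_of_forall_ringHom_eq_zero ℂ fun σ ↦ ?_
  exact not_not.1 (Finset.filter_eq_empty_iff.1 (Finset.card_eq_zero.1 hcard) (Finset.mem_univ σ))

end RingHom

namespace IsConnectedRing

variable {R : Type*} [CommRing R]

lemma isNilpotent_or_isNilpotent (hR : IsConnectedRing R) {x y : R}
    (hadd : IsUnit (x + y)) (hmul : IsNilpotent (x * y)) : IsNilpotent x ∨ IsNilpotent y := by
  obtain ⟨n, hn⟩ := hmul
  rw [mul_pow] at hn
  obtain ⟨c, hc⟩ := hadd.exists_right_inv
  have hcop : IsCoprime x y := ⟨c, c, by linear_combination hc⟩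
  obtain ⟨a, b, hab⟩ := hcop.pow (m := n) (n := n)
  have hidem : IsIdempotentElem (a * x ^ n) := by
    unfold IsIdempotentElem
    linear_combination a * x ^ n * hab - a * b * hn
  rcases hR.2 _ hidem with h | h
  · exact .inl ⟨n, by linear_combination -x ^ n * hab + x ^ n * h + b * hn⟩
  · exact .inr ⟨n, by linear_combination a * hn - y ^ n * h⟩

lemma of_ringEquiv {S : Type*} [CommRing S] (hR : IsConnectedRing R)
    (f : R ≃+* S) : IsConnectedRing S := by
  have := hR.1
  refine ⟨f.symm.toEquiv.nontrivial, fun e he ↦ ?_⟩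
  simpa using hR.2 _ (he.map f.symm)

end IsConnectedRing

lemma eq_of_isOfFinOrder_of_isNilpotent_sub {R : Type*} [CommRing R] [Module.IsTorsionFree ℤ R]
    {v w : R} (hv : IsOfFinOrder v) (hw : IsOfFinOrder w) (h : IsNilpotent (v - w)) : v = w := by
  obtain ⟨m, hm, hvm⟩ := isOfFinOrder_iff_pow_eq_one.1 hv
  obtain ⟨n, hn, hwn⟩ := isOfFinOrder_iff_pow_eq_one.1 hw
  have hv' : v ^ (m * n) = 1 := by rw [pow_mul, hvm, one_pow]
  have hw' : w ^ (m * n) = 1 := by rw [mul_comm, pow_mul, hwn, one_pow]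
  have hN : m * n ≠ 0 := (Nat.mul_pos hm hn).ne'
  generalize m * n = N at hv' hw' hN
  obtain ⟨d, rfl⟩ : ∃ d, v = w + d := ⟨v - w, by ring⟩
  rw [add_sub_cancel_left] at h
  obtain ⟨c, hc⟩ := Polynomial.powAddExpansion w d N
  have hwN : w ^ (N - 1) * w = 1 := by rw [pow_sub_one_mul hN, hw']
  have hNd : N * d = d * (-(w * c * d)) := by
    linear_combination -w * hc + w * hv' - w * hw' - N * d * hwN
  -- Iterating `hNd` kills `d` up to torsion, because its right-hand factor is nilpotent.
  have hNpow (k : ℕ) : N ^ k * d = d * (-(w * c * d)) ^ k := by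
    induction k with
    | zero => simp
    | succ k ih => linear_combination N * ih + (-(w * c * d)) ^ k * hNd
  obtain ⟨k, hk⟩ : IsNilpotent (-(w * c * d)) := ((Commute.all _ _).isNilpotent_mul_left h).neg
  have hd : ((N ^ k : ℕ) : ℤ) • d = 0 := by
    simpa [hk] using hNpow k
  rw [(smul_eq_zero_iff_right (by exact_mod_cast pow_ne_zero k hN)).1 hd, add_zero]

section MonoidAlgebra

open MonoidAlgebra

lemma finite_of_finite_monoidAlgebra {S A M : Type*} [Semiring S] [Semiring A] [Module S A]
    [Nontrivial (MonoidAlgebra A M)] [Module.Finite S (MonoidAlgebra A M)] : Finite M := by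
  have : Module.Finite S (M →₀ A) := Module.Finite.equiv (coeffLinearEquiv S)
  rcases Module.finite_finsupp_iff.1 this with hM | hA | ⟨-, hM⟩
  · infer_instance
  · exact (not_subsingleton (MonoidAlgebra A M) inferInstance).elim
  · exact hM

section Twist

variable {B H K : Type*} [Semiring B] [Monoid H] [CommSemiring K]

/-- The twist of a ring homomorphism `σ : B[H] → K` by a character `χ` of `H`: it sends `b h` to
`χ(h) σ(b h)`. Twisting permutes the homomorphisms `B[H] → K`. -/
noncomputable def twist (χ : H →* Kˣ) (σ : MonoidAlgebra B H →+* K) :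
    MonoidAlgebra B H →+* K :=
  liftNCRingHom (σ.comp singleOneRingHom)
    ((Units.coeHom K).comp χ * (σ : MonoidAlgebra B H →* K).comp (of B H))
    fun _ _ ↦ Commute.all _ _

lemma twist_single (χ : H →* Kˣ) (σ : MonoidAlgebra B H →+* K) (h : H) (b : B) :
    twist χ σ (single h b) = χ h * σ (single h b) := by
  have hσ : σ (single h b) = σ (single 1 b) * σ (single h 1) := by
    rw [← map_mul, single_mul_single, one_mul, mul_one]
  simp [twist, hσ, mul_left_comm]

lemma twist_injective (χ : H →* Kˣ) :
    Function.Injective (twist χ : (MonoidAlgebra B H →+* K) → _) := by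
  intro σ τ hστ
  have hsingle (h : H) (b : B) : σ (single h b) = τ (single h b) :=
    (χ h).isUnit.mul_left_cancel (by rw [← twist_single, hστ, twist_single])
  exact ringHom_ext (hsingle 1) fun h ↦ hsingle h 1

end Twist

section Orthogonality

variable {B H : Type*} [Semiring B] [CommGroup H] [Finite H] [Fintype (MonoidAlgebra B H →+* ℂ)]

lemma sum_ringHom_single_mul_conj_single_eq_zero {h k : H} (hhk : h ≠ k) (b c : B) :
    ∑ σ : MonoidAlgebra B H →+* ℂ, σ (single h b) * starRingEnd ℂ (σ (single k c)) = 0 := by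
  have : NeZero (Monoid.exponent H) := ⟨Monoid.exponent_ne_zero_of_finite⟩
  obtain ⟨χ, hχ⟩ := CommGroup.exists_apply_ne_one_of_hasEnoughRootsOfUnity H ℂ
    (div_ne_one.2 hhk)
  have hconj : starRingEnd ℂ (χ k : ℂ) = (χ k : ℂ)⁻¹ :=
    (Complex.inv_eq_conj (((Units.coeHom ℂ).comp χ).isOfFinOrder
      (isOfFinOrder_of_finite k)).norm_eq_one).symm
  set S := ∑ σ : MonoidAlgebra B H →+* ℂ, σ (single h b) * starRingEnd ℂ (σ (single k c))
  have hS : S = (χ (h / k) : ℂ) * S := by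
    calc S = ∑ σ, twist χ σ (single h b) * starRingEnd ℂ (twist χ σ (single k c)) :=
          ((Finite.injective_iff_bijective.1 (twist_injective χ)).sum_comp _).symm
      _ = (χ (h / k) : ℂ) * S := by
          rw [Finset.mul_sum]
          refine Finset.sum_congr rfl fun σ _ ↦ ?_
          rw [twist_single, twist_single, map_mul, hconj, map_div, Units.val_div_eq_div_val]
          ring
  by_contra hS₀
  exact hχ (Units.ext (mul_eq_right₀ hS₀ |>.1 hS.symm))

lemma sum_ringHom_single_mul_conj_eq_zero {h : H} {x : MonoidAlgebra B H}
    (hx : x.coeff h = 0) (b : B) :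
    ∑ σ : MonoidAlgebra B H →+* ℂ, σ (single h b) * starRingEnd ℂ (σ x) = 0 := by
  rw [← sum_coeff_single x, Finsupp.sum]
  simp_rw [map_sum, Finset.mul_sum]
  rw [Finset.sum_comm]
  refine Finset.sum_eq_zero fun k hk ↦ sum_ringHom_single_mul_conj_single_eq_zero ?_ b _
  rintro rfl
  exact Finsupp.mem_support_iff.1 hk hx

end Orthogonality

variable {B H : Type*} [CommRing B] [CommGroup H]
  [Module.Finite ℤ (MonoidAlgebra B H)] [Module.IsTorsionFree ℤ (MonoidAlgebra B H)]

lemma isNilpotent_single_or_isNilpotent_sub_single (hconn : IsConnectedRing (MonoidAlgebra B H))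
    {u : MonoidAlgebra B H} (hu : IsOfFinOrder u) (h : H) :
    IsNilpotent (single h (u.coeff h)) ∨ IsNilpotent (u - single h (u.coeff h)) := by
  have := hconn.1
  have : Finite H := finite_of_finite_monoidAlgebra (S := ℤ) (A := B)
  have := Fintype.ofFinite (MonoidAlgebra B H →+* ℂ)
  have hadd : single h (u.coeff h) + (u - single h (u.coeff h)) = u := add_sub_cancel _ _
  refine hconn.isNilpotent_or_isNilpotent (hadd.symm ▸ hu.isUnit)
    (isNilpotent_mul_of_orthogonal (fun σ ↦ ?_) (sum_ringHom_single_mul_conj_eq_zero ?_ _))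
  · rw [hadd]
    exact ((σ : MonoidAlgebra B H →* ℂ).isOfFinOrder hu).norm_eq_one
  · simp

lemma exists_isNilpotent_sub_single (hconn : IsConnectedRing (MonoidAlgebra B H))
    {u : MonoidAlgebra B H} (hu : IsOfFinOrder u) :
    ∃ h, IsNilpotent (u - single h (u.coeff h)) := by
  have := hconn.1
  by_contra! hno
  have hnil (h : H) : IsNilpotent (single h (u.coeff h)) :=
    (isNilpotent_single_or_isNilpotent_sub_single hconn hu h).resolve_right (hno h)
  refine hu.isUnit.not_isNilpotent ?_
  rw [← sum_coeff_single u]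
  exact isNilpotent_sum fun h _ ↦ hnil h

lemma exists_eq_single_of_isOfFinOrder (hconn : IsConnectedRing (MonoidAlgebra B H))
    {u : MonoidAlgebra B H} (hu : IsOfFinOrder u) : ∃ h b, u = single h b := by
  have := hconn.1
  have : Finite H := finite_of_finite_monoidAlgebra (S := ℤ) (A := B)
  obtain ⟨h, hh⟩ := exists_isNilpotent_sub_single hconn hu
  let ε : MonoidAlgebra B H →ₐ[B] B := MonoidAlgebra.lift B B H 1
  obtain ⟨n, hn⟩ : IsNilpotent (u.coeff h - ε u) := by
    simpa [ε] using (hh.map ε).neg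
  have hε : IsNilpotent (single h (u.coeff h - ε u)) := ⟨n, by rw [single_pow, hn, single_zero]⟩
  have hfin : IsOfFinOrder (single h (ε u)) := by
    have := ((of B H).isOfFinOrder (isOfFinOrder_of_finite h)).mul
      (((singleOneRingHom : B →+* MonoidAlgebra B H) : B →* _).isOfFinOrder
        ((ε : _ →* B).isOfFinOrder hu))
    simpa using this
  refine ⟨h, ε u, eq_of_isOfFinOrder_of_isNilpotent_sub hu hfin ?_⟩
  have := (Commute.all _ _).isNilpotent_add hh hε
  rwa [single_sub, sub_add_sub_cancel] at this

end MonoidAlgebra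

section gpRgHom

open MonoidAlgebra

variable {R : Type*} [CommRing R] {A B S : Subring R} {G H J : Subgroup Rˣ}

@[simp]
lemma gpRgHom_single (g : G) (a : A) : gpRgHom A G (single g a) = (a : R) * ((g : Rˣ) : R) := by
  simp [gpRgHom]

lemma range_gpRgHom_le_iff : (gpRgHom A G).range ≤ S ↔ A ≤ S ∧ ∀ g ∈ G, (g : R) ∈ S := by
  refine ⟨fun h ↦ ⟨fun a ha ↦ ?_, fun g hg ↦ ?_⟩, ?_⟩
  · exact h ⟨single 1 ⟨a, ha⟩, by simp⟩
  · exact h ⟨single ⟨g, hg⟩ 1, by simp⟩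
  · rintro ⟨hA, hG⟩ _ ⟨z, rfl⟩
    induction z using MonoidAlgebra.induction_linear with
    | zero => simp
    | add x y hx hy => exact map_add (gpRgHom A G) x y ▸ S.add_mem hx hy
    | single g a => exact gpRgHom_single g a ▸ S.mul_mem (hA a.2) (hG g g.2)

lemma gpRgHom_mapDomain_inclusion (hJG : J ≤ G) (z : MonoidAlgebra A J) :
    gpRgHom A G (mapDomain (Subgroup.inclusion hJG) z) = gpRgHom A J z := by
  have : (gpRgHom A G).comp (mapDomainRingHom A (Subgroup.inclusion hJG)) = gpRgHom A J := by
    ext <;> simp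
  exact DFunLike.congr_fun this z

lemma gpRgHom_mapRingHom_inclusion (hAB : A ≤ B) (z : MonoidAlgebra A G) :
    gpRgHom B G (mapRingHom G (Subring.inclusion hAB) z) = gpRgHom A G z := by
  have : (gpRgHom B G).comp (mapRingHom G (Subring.inclusion hAB)) = gpRgHom A G := by
    ext <;> simp
  exact DFunLike.congr_fun this z

lemma gpRgHom_injective_of_le (hJG : J ≤ G) (hG : Function.Injective (gpRgHom A G)) :
    Function.Injective (gpRgHom A J) := by
  intro x y hxy
  refine mapDomain_injective (Subgroup.inclusion_injective hJG) (hG ?_)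
  rwa [gpRgHom_mapDomain_inclusion, gpRgHom_mapDomain_inclusion]

lemma eq_of_le_of_surjective_gpRgHom (hAB : A ≤ B) (hB : Function.Injective (gpRgHom B G))
    (hA : Function.Surjective (gpRgHom A G)) : A = B := by
  refine le_antisymm hAB fun b hb ↦ ?_
  obtain ⟨z, hz⟩ := hA b
  have hsingle : mapRingHom G (Subring.inclusion hAB) z = single 1 ⟨b, hb⟩ := hB (by
    rw [gpRgHom_mapRingHom_inclusion, hz, gpRgHom_single]
    simp)
  have hcoeff : (z.coeff 1 : R) = b := by
    simpa using congrArg (fun w ↦ (w.coeff 1 : R)) hsingle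
  exact hcoeff ▸ (z.coeff 1).2

lemma disjoint_torsionUnitsIn [Nontrivial R] (hB : Function.Injective (gpRgHom B H)) :
    Disjoint (torsionUnitsIn B) H := by
  refine Subgroup.disjoint_def.2 fun {u} huB huH ↦ ?_
  have hsingle : single (⟨u, huH⟩ : H) (1 : B) = single 1 ⟨u, huB.2⟩ := hB (by simp)
  rcases single_inj.1 hsingle with ⟨h, -⟩ | ⟨h, -⟩
  · exact congrArg Subtype.val h
  · exact (one_ne_zero h).elim

lemma surjective_gpRgHom_range_of_sup_eq (hJH : J ⊔ H = G)
    (hG : Function.Surjective (gpRgHom A G)) :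
    Function.Surjective (gpRgHom (gpRgHom A J).range H) := by
  obtain ⟨hA, hJ⟩ := range_gpRgHom_le_iff.1 (le_refl (gpRgHom A J).range)
  obtain ⟨hS, hH⟩ := range_gpRgHom_le_iff.1 (le_refl (gpRgHom (gpRgHom A J).range H).range)
  rw [← RingHom.range_eq_top, eq_top_iff, ← RingHom.range_eq_top.2 hG, range_gpRgHom_le_iff]
  refine ⟨hA.trans hS, fun g hg ↦ ?_⟩
  rw [← hJH] at hg
  obtain ⟨j, hj, h, hh, rfl⟩ := Subgroup.mem_sup.1 hg
  exact mul_mem (hS (hJ j hj)) (hH h hh)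

end gpRgHom

namespace IsGpRg

variable {R : Type*} [CommRing R] {B : Subring R} {H : Subgroup Rˣ}

/-- The isomorphism `B[H] ≃ R` attached to a group ring decomposition `B[H] = R`. -/
noncomputable def ringEquiv (hBH : IsGpRg B H) : MonoidAlgebra B H ≃+* R :=
  RingEquiv.ofBijective (gpRgHom B H) hBH

lemma ringEquiv_single (hBH : IsGpRg B H) (h : H) (b : B) :
    hBH.ringEquiv (MonoidAlgebra.single h b) = b * ((h : Rˣ) : R) :=
  gpRgHom_single h b

variable [Module.Finite ℤ R]

lemma finite_monoidAlgebra (hBH : IsGpRg B H) : Module.Finite ℤ (MonoidAlgebra B H) :=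
  Module.Finite.equiv hBH.ringEquiv.symm.toAddEquiv.toIntLinearEquiv

lemma le_torsion [Nontrivial R] (hBH : IsGpRg B H) : H ≤ CommGroup.torsion Rˣ := by
  have := hBH.finite_monoidAlgebra
  have := hBH.ringEquiv.toEquiv.nontrivial
  have : Finite H := finite_of_finite_monoidAlgebra (S := ℤ) (A := B)
  exact fun h hh ↦ H.subtype.isOfFinOrder (isOfFinOrder_of_finite (⟨h, hh⟩ : H))

lemma torsionUnitsIn_sup_eq_torsion [Module.IsTorsionFree ℤ R] (hR : IsConnectedRing R)
    (hBH : IsGpRg B H) : torsionUnitsIn B ⊔ H = CommGroup.torsion Rˣ := by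
  have := hR.1
  refine le_antisymm (sup_le (fun u hu ↦ hu.1) hBH.le_torsion) fun u hu ↦ ?_
  have := hBH.finite_monoidAlgebra
  have : Module.IsTorsionFree ℤ (MonoidAlgebra B H) :=
    hBH.ringEquiv.injective.moduleIsTorsionFree _ fun c x ↦ map_zsmul hBH.ringEquiv c x
  obtain ⟨h, b, hb⟩ := exists_eq_single_of_isOfFinOrder (hR.of_ringEquiv hBH.ringEquiv.symm)
    (((hBH.ringEquiv.symm : R →* MonoidAlgebra B H).comp (Units.coeHom R)).isOfFinOrder hu)
  have hu_eq : (u : R) = b * ((h : Rˣ) : R) := by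
    rw [← ringEquiv_single hBH, ← hb]
    simp
  have hdiv : ((u / h : Rˣ) : R) = b := by
    rw [div_eq_mul_inv, Units.val_mul, hu_eq, Units.mul_inv_cancel_right]
  refine Subgroup.mem_sup.2 ⟨u / h, ⟨?_, hdiv ▸ b.2⟩, h, h.2, div_mul_cancel _ _⟩
  exact div_mem hu (hBH.le_torsion h.2)

end IsGpRg

/-- Let `R` be a connected order and `(A,G), (B,H) ∈ GpRg(R)` with
`(B,H) ≤ (A,G)`, i.e. `H ⊆ G` and `A ⊆ B`. Let `J = G ∩ μ(B)`. Then the multiplication map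
`J × H → G` is a group isomorphism and the natural ring homomorphism `A[J] → B` is an
isomorphism. -/
theorem gpRg_intermediate_factorization
    {R : Type u} [CommRing R] [Module.Free ℤ R] [Module.Finite ℤ R]
    (hconn : IsConnectedRing R)
    (A B : Subring R) (G H : Subgroup Rˣ)
    (hAG : IsGpRg A G) (hBH : IsGpRg B H) (hHG : H ≤ G) (hAB : A ≤ B) :
    (Function.Injective
        (fun p : (G ⊓ torsionUnitsIn B : Subgroup Rˣ) × H => ((p.1 : Rˣ) * (p.2 : Rˣ) : Rˣ)) ∧
      Set.range
        (fun p : (G ⊓ torsionUnitsIn B : Subgroup Rˣ) × H => ((p.1 : Rˣ) * (p.2 : Rˣ) : Rˣ)) =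
        (G : Set Rˣ)) ∧
    (Function.Injective (gpRgHom A (G ⊓ torsionUnitsIn B)) ∧
      Set.range (gpRgHom A (G ⊓ torsionUnitsIn B)) = (B : Set R)) := by
  set J := G ⊓ torsionUnitsIn B with hJ
  have := hconn.1
  have hJH : J ⊔ H = G := by
    rw [hJ, inf_sup_assoc_of_le _ hHG, hBH.torsionUnitsIn_sup_eq_torsion hconn,
      inf_eq_left.2 hAG.le_torsion]
  have hle : (gpRgHom A J).range ≤ B := range_gpRgHom_le_iff.2 ⟨hAB, fun j hj ↦ hj.2.2⟩
  refine ⟨⟨?_, ?_⟩, gpRgHom_injective_of_le inf_le_left hAG.1, ?_⟩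
  · exact Subgroup.mul_injective_of_disjoint
      ((disjoint_torsionUnitsIn hBH.1).mono_left inf_le_right)
  · ext g
    rw [SetLike.mem_coe, ← hJH, Subgroup.mem_sup]
    simp
  · rw [← RingHom.coe_range, eq_of_le_of_surjective_gpRgHom hle hBH.1
      (surjective_gpRgHom_range_of_sup_eq hJH hAG.2)]
end
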